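/- arXiv:2605.10173 — 10 statements merged into one kernel-verified Lean document; each statement's English description precedes it below -/
import Mathlib

section
/- Let X be a topological space and Q a nonempty compact subset of X. For every h ∈ ℒX the infimum inf_{x∈Q} h(x) is attained, and the map sending each h ∈ ℒX to min_{x∈Q} h(x) is a normalized superlinear prevision on X. -/
open scoped ENNReal NNReal

/-- A prevision on `X`: a Scott-continuous, positively homogeneous functional on the
lower semicontinuous maps `X → ℝ≥0∞` (represented as a functional on all maps,
constrained only on lower semicontinuous arguments). -/
def IsPrevision {X : Type*} [TopologicalSpace X] (F : (X → ℝ≥0∞) → ℝ≥0∞) : Prop :=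
  (∀ ⦃h h' : X → ℝ≥0∞⦄, LowerSemicontinuous h → LowerSemicontinuous h' →
      h ≤ h' → F h ≤ F h') ∧
  (∀ D : Set (X → ℝ≥0∞), D.Nonempty → (∀ h ∈ D, LowerSemicontinuous h) →
      DirectedOn (· ≤ ·) D → F (fun x => ⨆ h ∈ D, h x) = ⨆ h ∈ D, F h) ∧
  (∀ (a : ℝ≥0) (h : X → ℝ≥0∞), LowerSemicontinuous h →
      F (fun x => (a : ℝ≥0∞) * h x) = (a : ℝ≥0∞) * F h)

/-- Sublinearity of a prevision. -/
def PSublinear {X : Type*} [TopologicalSpace X] (F : (X → ℝ≥0∞) → ℝ≥0∞) : Prop :=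
  ∀ h h' : X → ℝ≥0∞, LowerSemicontinuous h → LowerSemicontinuous h' →
    F (fun x => h x + h' x) ≤ F h + F h'

/-- Superlinearity of a prevision. -/
def PSuperlinear {X : Type*} [TopologicalSpace X] (F : (X → ℝ≥0∞) → ℝ≥0∞) : Prop :=
  ∀ h h' : X → ℝ≥0∞, LowerSemicontinuous h → LowerSemicontinuous h' →
    F h + F h' ≤ F (fun x => h x + h' x)

/-- Linearity of a prevision. -/
def PLinear {X : Type*} [TopologicalSpace X] (F : (X → ℝ≥0∞) → ℝ≥0∞) : Prop :=
  ∀ h h' : X → ℝ≥0∞, LowerSemicontinuous h → LowerSemicontinuous h' →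
    F (fun x => h x + h' x) = F h + F h'

/-- Subnormalization: `F(𝟙 + h) ≤ 1 + F(h)`. -/
def PSubnormalized {X : Type*} [TopologicalSpace X] (F : (X → ℝ≥0∞) → ℝ≥0∞) : Prop :=
  ∀ h : X → ℝ≥0∞, LowerSemicontinuous h → F (fun x => 1 + h x) ≤ 1 + F h

/-- Normalization: `F(𝟙 + h) = 1 + F(h)`. -/
def PNormalized {X : Type*} [TopologicalSpace X] (F : (X → ℝ≥0∞) → ℝ≥0∞) : Prop :=
  ∀ h : X → ℝ≥0∞, LowerSemicontinuous h → F (fun x => 1 + h x) = 1 + F h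

/-!
Lower semicontinuous functions attain their minimum on a nonempty compact set `Q`, so taking the
minimum over `Q` commutes with every monotone map of the values; multiplication by a constant and
`1 + ·` are such maps, which gives homogeneity and normalization. For Scott-continuity, suppose
that `c := ⨆ i, min_Q (h i)` lies strictly below `min_Q (⨆ i, h i)`. Then the sets `{c < h i}` form
a directed open cover of `Q`, so a single one of them contains `Q`, and since `h i` attains its
minimum we get `c < min_Q (h i)`, which is absurd.
-/

section LowerSemicontinuousOn

variable {X ι α β : Type*} [TopologicalSpace X] {Q : Set X}

theorem exists_mem_eq_biInf_of_isCompact [CompleteLinearOrder α] {h : X → α}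
    (hQ : IsCompact Q) (hne : Q.Nonempty) (hh : LowerSemicontinuousOn h Q) :
    ∃ x ∈ Q, h x = ⨅ y ∈ Q, h y := by
  obtain ⟨x, hx, hmin⟩ := hh.exists_isMinOn hne hQ
  exact ⟨x, hx, le_antisymm (le_iInf₂ fun y hy => hmin hy) (iInf₂_le x hx)⟩

theorem map_biInf_of_isCompact [CompleteLinearOrder α] [CompleteLattice β] {f : α → β}
    {h : X → α} (hf : Monotone f) (hQ : IsCompact Q) (hne : Q.Nonempty)
    (hh : LowerSemicontinuousOn h Q) :
    f (⨅ x ∈ Q, h x) = ⨅ x ∈ Q, f (h x) := by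
  obtain ⟨x, hx, hmin⟩ := exists_mem_eq_biInf_of_isCompact hQ hne hh
  refine le_antisymm (hf.map_iInf₂_le _) ?_
  rw [← hmin]
  exact iInf₂_le x hx

theorem exists_forall_mem_lt_of_directed [Preorder α] [Nonempty ι] {h : ι → X → α} {c : α}
    (hQ : IsCompact Q) (hh : ∀ i, LowerSemicontinuousOn (h i) Q) (hdir : Directed (· ≤ ·) h)
    (hc : ∀ x ∈ Q, ∃ i, c < h i x) :
    ∃ i, ∀ x ∈ Q, c < h i x := by
  refine hQ.induction_on (p := fun s => ∃ i, ∀ x ∈ s, c < h i x) (by simp) ?_ ?_ ?_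
  · rintro s t hst ⟨i, hi⟩
    exact ⟨i, fun x hx => hi x (hst hx)⟩
  · rintro s t ⟨i, hi⟩ ⟨j, hj⟩
    obtain ⟨k, hik, hjk⟩ := hdir i j
    exact ⟨k, fun x hx => hx.elim (fun hs => (hi x hs).trans_le (hik x))
      fun ht => (hj x ht).trans_le (hjk x)⟩
  · intro x hx
    obtain ⟨i, hi⟩ := hc x hx
    exact ⟨{y | c < h i y}, hh i x hx c hi, i, fun _ hy => hy⟩

theorem biInf_iSup_eq_iSup_biInf_of_directed [CompleteLinearOrder α] [Nonempty ι] {h : ι → X → α}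
    (hQ : IsCompact Q) (hh : ∀ i, LowerSemicontinuousOn (h i) Q)
    (hdir : Directed (· ≤ ·) h) :
    ⨅ x ∈ Q, ⨆ i, h i x = ⨆ i, ⨅ x ∈ Q, h i x := by
  obtain rfl | hne := Q.eq_empty_or_nonempty
  · simp
  refine le_antisymm ?_ (iSup_le fun i => iInf₂_mono fun x _ => le_iSup (h · x) i)
  by_contra! hlt
  obtain ⟨i, hi⟩ := exists_forall_mem_lt_of_directed hQ hh hdir fun x hx =>
    lt_iSup_iff.1 (hlt.trans_le (iInf₂_le x hx))
  obtain ⟨x, hx, hmin⟩ := exists_mem_eq_biInf_of_isCompact hQ hne (hh i)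
  have hle : h i x ≤ ⨆ j, ⨅ y ∈ Q, h j y := hmin ▸ le_iSup (fun j => ⨅ y ∈ Q, h j y) i
  exact (hi x hx).not_ge hle

end LowerSemicontinuousOn

section Prevision

variable {X : Type*} [TopologicalSpace X] {Q : Set X}

theorem isPrevision_biInf (hQ : IsCompact Q) (hne : Q.Nonempty) :
    IsPrevision (fun h : X → ℝ≥0∞ => ⨅ x ∈ Q, h x) := by
  refine ⟨fun _ _ _ _ hle => iInf₂_mono fun x _ => hle x, fun D hD hlsc hdir => ?_,
    fun a h hh => ?_⟩
  · have : Nonempty D := hD.to_subtype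
    simpa only [iSup_subtype'] using biInf_iSup_eq_iSup_biInf_of_directed hQ
      (fun h : D => (hlsc h h.2).lowerSemicontinuousOn Q) hdir.directed_val
  · exact (map_biInf_of_isCompact (fun _ _ hle => by gcongr) hQ hne
      (hh.lowerSemicontinuousOn Q)).symm

theorem pSuperlinear_biInf (Q : Set X) :
    PSuperlinear (fun h : X → ℝ≥0∞ => ⨅ x ∈ Q, h x) :=
  fun _ _ _ _ => le_iInf₂ fun x hx => add_le_add (iInf₂_le x hx) (iInf₂_le x hx)

theorem pNormalized_biInf (hQ : IsCompact Q) (hne : Q.Nonempty) :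
    PNormalized (fun h : X → ℝ≥0∞ => ⨅ x ∈ Q, h x) :=
  fun _ hh => (map_biInf_of_isCompact (fun _ _ hle => by gcongr) hQ hne
    (hh.lowerSemicontinuousOn Q)).symm

end Prevision

/-- for a nonempty compact `Q ⊆ X`, the infimum of any lower semicontinuous
`h` on `Q` is attained, and `h ↦ min_{x ∈ Q} h x` is a normalized superlinear prevision. -/
theorem statement1 {X : Type*} [TopologicalSpace X] (Q : Set X)
    (hQ : IsCompact Q) (hne : Q.Nonempty) :
    (∀ h : X → ℝ≥0∞, LowerSemicontinuous h → ∃ x ∈ Q, h x = ⨅ y ∈ Q, h y) ∧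
    IsPrevision (fun h : X → ℝ≥0∞ => ⨅ x ∈ Q, h x) ∧
    PSuperlinear (fun h : X → ℝ≥0∞ => ⨅ x ∈ Q, h x) ∧
    PNormalized (fun h : X → ℝ≥0∞ => ⨅ x ∈ Q, h x) :=
  ⟨fun _ hh => exists_mem_eq_biInf_of_isCompact hQ hne (hh.lowerSemicontinuousOn Q),
    isPrevision_biInf hQ hne, pSuperlinear_biInf Q, pNormalized_biInf hQ hne⟩
end

section
/- Let C be a cone, x₀ ∈ C, and A a convex subset of C. Then the cast shadow shadow(A, x₀) = ⋃_{β ∈ (0,1]} shd_{x₀,β}⁻¹(A) is convex. -/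
open scoped NNReal

/-!
In the parameter `t = (1 - β) / β`, the condition `β • x + (1 - β) • x₀ ∈ A` becomes
`x + t • x₀ ∈ (1 + t) • A`, which is affine in the pair `(x, t)`. Since `A` is convex,
`p • A + q • A ⊆ (p + q) • A` for nonnegative `p` and `q`, so a convex combination of two solutions
`(x, t)` is again a solution.
-/

section CastShadow

variable {𝕜 C : Type*} [AddCommMonoid C]

section Definition

variable [Semiring 𝕜] [PartialOrder 𝕜] [Module 𝕜 C]

variable (𝕜) in
/-- The shadow cast by `A` under a light source at `x₀`: the points `x` with a convex combination
of `x` and `x₀`, of positive weight `β` at `x`, in `A`. The weight `1 - β` of `x₀` is encoded as a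
nonnegative `γ` with `β + γ = 1`, so that no subtraction is required of the scalars. -/
def castShadow (x₀ : C) (A : Set C) : Set C :=
  {x | ∃ β γ : 𝕜, 0 < β ∧ 0 ≤ γ ∧ β + γ = 1 ∧ β • x + γ • x₀ ∈ A}

theorem castShadow_eq_setOf_tsub [CanonicallyOrderedAdd 𝕜] [Sub 𝕜] [OrderedSub 𝕜]
    [AddLeftReflectLE 𝕜] (x₀ : C) (A : Set C) :
    castShadow 𝕜 x₀ A = {x | ∃ β : 𝕜, 0 < β ∧ β ≤ 1 ∧ β • x + (1 - β) • x₀ ∈ A} := by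
  ext x
  constructor
  · rintro ⟨β, γ, hβ, -, hβγ, hx⟩
    have hγ : 1 - β = γ := by rw [← hβγ, add_tsub_cancel_left]
    exact ⟨β, hβ, hβγ ▸ le_self_add, hγ.symm ▸ hx⟩
  · rintro ⟨β, hβ, hβ_le, hx⟩
    exact ⟨β, 1 - β, hβ, zero_le, add_tsub_cancel_of_le hβ_le, hx⟩

end Definition

variable [Semifield 𝕜] [LinearOrder 𝕜] [IsStrictOrderedRing 𝕜] [Module 𝕜 C]
  {A : Set C} {x x₀ y : C}

theorem exists_mem_add_smul_eq_of_convex (hA : Convex 𝕜 A) (hx : x ∈ A) (hy : y ∈ A) {p q : 𝕜}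
    (hp : 0 ≤ p) (hq : 0 ≤ q) : ∃ z ∈ A, (p + q) • z = p • x + q • y := by
  obtain hpq | hpq := (add_nonneg hp hq).eq_or_lt
  · obtain ⟨rfl, rfl⟩ := (add_eq_zero_iff_of_nonneg hp hq).1 hpq.symm
    exact ⟨x, hx, by simp⟩
  · have hsum : p / (p + q) + q / (p + q) = 1 := by rw [← add_div, div_self hpq.ne']
    refine ⟨_, hA hx hy (div_nonneg hp hpq.le) (div_nonneg hq hpq.le) hsum, ?_⟩
    rw [smul_add, smul_smul, smul_smul, mul_div_cancel₀ _ hpq.ne', mul_div_cancel₀ _ hpq.ne']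

theorem mem_castShadow_iff_exists_one_add_smul_eq :
    x ∈ castShadow 𝕜 x₀ A ↔ ∃ t : 𝕜, 0 ≤ t ∧ ∃ z ∈ A, (1 + t) • z = x + t • x₀ := by
  constructor
  · rintro ⟨β, γ, hβ, hγ, hβγ, hx⟩
    have hscale : 1 + γ / β = β⁻¹ := by
      rw [← div_self hβ.ne', ← add_div, hβγ, one_div]
    refine ⟨γ / β, div_nonneg hγ hβ.le, _, hx, ?_⟩
    rw [hscale, smul_add, inv_smul_smul₀ hβ.ne', smul_smul, inv_mul_eq_div]
  · rintro ⟨t, ht, z, hz, hzx⟩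
    have hpos : 0 < 1 + t := by positivity
    have hz_eq : (1 + t)⁻¹ • x + (t / (1 + t)) • x₀ = z := by
      rw [← inv_smul_smul₀ hpos.ne' z, hzx, smul_add, smul_smul, inv_mul_eq_div]
    refine ⟨(1 + t)⁻¹, t / (1 + t), inv_pos.2 hpos, div_nonneg ht hpos.le, ?_, hz_eq.symm ▸ hz⟩
    rw [← one_div, ← add_div, div_self hpos.ne']

theorem statement6_general (x₀ : C) (hA : Convex 𝕜 A) : Convex 𝕜 (castShadow 𝕜 x₀ A) := by
  intro x hx y hy a b ha hb hab
  rw [mem_castShadow_iff_exists_one_add_smul_eq] at hx hy ⊢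
  obtain ⟨t, ht, z, hz, hzx⟩ := hx
  obtain ⟨u, hu, w, hw, hwy⟩ := hy
  obtain ⟨v, hv, hv_eq⟩ : ∃ v ∈ A, (a * (1 + t) + b * (1 + u)) • v
      = (a * (1 + t)) • z + (b * (1 + u)) • w :=
    exists_mem_add_smul_eq_of_convex hA hz hw (by positivity) (by positivity)
  have hcoeff : a * (1 + t) + b * (1 + u) = 1 + (a * t + b * u) := by
    rw [mul_one_add, mul_one_add, add_add_add_comm, hab]
  refine ⟨a * t + b * u, by positivity, v, hv, ?_⟩
  calc (1 + (a * t + b * u)) • v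
      = (a * (1 + t) + b * (1 + u)) • v := by rw [hcoeff]
    _ = a • (1 + t) • z + b • (1 + u) • w := by rw [hv_eq, mul_smul, mul_smul]
    _ = a • (x + t • x₀) + b • (y + u • x₀) := by rw [hzx, hwy]
    _ = a • x + b • y + (a * t + b * u) • x₀ := by module

end CastShadow

/-- in a cone (an additive commutative monoid with an action of the
semiring of nonnegative reals), the cast shadow
`shadow(A, x₀) = ⋃_{β ∈ (0,1]} (shd_{x₀,β})⁻¹(A)` of a convex set `A`, where
`shd_{x₀,β}(x) = β•x + (1−β)•x₀`, is convex. -/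
theorem statement6 {C : Type*} [AddCommMonoid C] [Module ℝ≥0 C] (x₀ : C)
    (A : Set C) (hA : Convex ℝ≥0 A) :
    Convex ℝ≥0 {x : C | ∃ β : ℝ≥0, 0 < β ∧ β ≤ 1 ∧ β • x + (1 - β) • x₀ ∈ A} := by
  rw [← castShadow_eq_setOf_tsub]
  exact statement6_general x₀ hA
end

section
/- Let X be a topological space and P a prevision on X. Then P is subnormalized if and only if for every α ∈ (0,1] and every h ∈ ℒX, P(α·h + (1−α)·𝟙) > 1 implies P(h) > 1. -/
open scoped ENNReal NNReal

/-!
By homogeneity, `PSubnormalized P` amounts to the bound `P (a • h + b • 𝟙) ≤ a * P h + b` for all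
finite `a` and `b`; a convex combination of `h` and `𝟙` thus stays in the sublevel set `P ≤ 1` when
`h` lies in it. Conversely, if `P h ≤ t` with `0 < t < ∞`, then `t⁻¹ • h` lies in that sublevel set,
and `(1 + t)⁻¹ • (𝟙 + h)` is the convex combination of `t⁻¹ • h` and `𝟙` of weight `t / (1 + t)`,
so `P (𝟙 + h) ≤ 1 + t`. If `P h < ∞`, let `t` decrease to `P h`.
-/

/-- Positive homogeneity of a functional on the lower semicontinuous maps `X → ℝ≥0∞`, with finite
scalars only; as in `IsPrevision`, other arguments are not constrained. -/
def PHomogeneous {X : Type*} [TopologicalSpace X] (F : (X → ℝ≥0∞) → ℝ≥0∞) : Prop :=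
  ∀ (a : ℝ≥0) (h : X → ℝ≥0∞), LowerSemicontinuous h →
    F (fun x => (a : ℝ≥0∞) * h x) = (a : ℝ≥0∞) * F h

section

variable {X : Type*} [TopologicalSpace X] {P : (X → ℝ≥0∞) → ℝ≥0∞} {h : X → ℝ≥0∞}

theorem IsPrevision.pHomogeneous (hP : IsPrevision P) : PHomogeneous P :=
  hP.2.2

theorem lowerSemicontinuous_ennreal_const_mul (hh : LowerSemicontinuous h) {a : ℝ≥0∞}
    (ha : a ≠ ∞) : LowerSemicontinuous fun x => a * h x :=
  (ENNReal.continuous_const_mul ha).comp_lowerSemicontinuous hh fun _ _ hxy =>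
    mul_le_mul_right hxy a

theorem PSubnormalized.apply_mul_add_const_le (hsub : PSubnormalized P) (hP : PHomogeneous P)
    (hh : LowerSemicontinuous h) (a b : ℝ≥0) :
    P (fun x => (a : ℝ≥0∞) * h x + b) ≤ a * P h + b := by
  rcases eq_or_ne b 0 with rfl | hb
  · simpa using (hP a h hh).le
  have hab : (b : ℝ≥0∞) * (a / b : ℝ≥0) = a := by
    rw [← ENNReal.coe_mul, mul_div_cancel₀ a hb]
  have factor (c : ℝ≥0∞) : a * c + b = b * (1 + (a / b : ℝ≥0) * c) := by
    rw [mul_add, mul_one, ← mul_assoc, hab, add_comm]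
  have hah : LowerSemicontinuous fun x => ((a / b : ℝ≥0) : ℝ≥0∞) * h x :=
    lowerSemicontinuous_ennreal_const_mul hh ENNReal.coe_ne_top
  calc
    P (fun x => (a : ℝ≥0∞) * h x + b)
        = b * P (fun x => 1 + (a / b : ℝ≥0) * h x) := by
      simp only [factor]
      exact hP b _ (lowerSemicontinuous_const.add hah)
    _ ≤ b * (1 + P fun x => (a / b : ℝ≥0) * h x) := by gcongr; exact hsub _ hah
    _ = a * P h + b := by rw [hP _ h hh, ← factor]

theorem PHomogeneous.apply_one_add_le_of_apply_le (hP : PHomogeneous P)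
    (hconv : ∀ α : ℝ≥0, 0 < α → α ≤ 1 → ∀ h : X → ℝ≥0∞, LowerSemicontinuous h →
      1 < P (fun x => (α : ℝ≥0∞) * h x + ((1 - α : ℝ≥0) : ℝ≥0∞)) → 1 < P h)
    (hh : LowerSemicontinuous h) {t : ℝ≥0} (ht : 0 < t) (hPh : P h ≤ t) :
    P (fun x => 1 + h x) ≤ 1 + t := by
  have weight_compl : 1 - t / (1 + t) = (1 + t)⁻¹ := tsub_eq_of_eq_add (by field_simp)
  have weight_mul_inv : t / (1 + t) * t⁻¹ = (1 + t)⁻¹ := by field_simp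
  have combination (c : ℝ≥0∞) :
      ((t / (1 + t) : ℝ≥0) : ℝ≥0∞) * ((t⁻¹ : ℝ≥0) * c) + (1 - t / (1 + t) : ℝ≥0)
        = ((1 + t)⁻¹ : ℝ≥0) * (1 + c) := by
    rw [← mul_assoc, ← ENNReal.coe_mul, weight_mul_inv, weight_compl, mul_add, mul_one, add_comm]
  have apply_inv_mul_le_one : P (fun x => (t⁻¹ : ℝ≥0) * h x) ≤ 1 := by
    rw [hP _ h hh, ENNReal.coe_inv ht.ne']
    exact (ENNReal.inv_mul_le_iff (by simpa using ht.ne') ENNReal.coe_ne_top).2 (by simpa using hPh)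
  have apply_combination_le_one : P (fun x => ((1 + t)⁻¹ : ℝ≥0) * (1 + h x)) ≤ 1 := by
    simp only [← combination]
    exact not_lt.1 fun hlt => apply_inv_mul_le_one.not_gt <|
      hconv _ (by positivity) (div_le_one_of_le₀ le_add_self zero_le) _
        (lowerSemicontinuous_ennreal_const_mul hh ENNReal.coe_ne_top) hlt
  rw [hP _ _ (lowerSemicontinuous_const.add hh), ENNReal.coe_inv (by positivity),
    ENNReal.inv_mul_le_iff (by simp) ENNReal.coe_ne_top] at apply_combination_le_one
  simpa using apply_combination_le_one

end

theorem statement8_general {X : Type*} [TopologicalSpace X] {P : (X → ℝ≥0∞) → ℝ≥0∞}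
    (hP : PHomogeneous P) :
    PSubnormalized P ↔
      ∀ α : ℝ≥0, 0 < α → α ≤ 1 → ∀ h : X → ℝ≥0∞, LowerSemicontinuous h →
        1 < P (fun x => (α : ℝ≥0∞) * h x + ((1 - α : ℝ≥0) : ℝ≥0∞)) → 1 < P h := by
  constructor
  · intro hsub α _ hα h hh
    contrapose!
    intro hPh
    calc
      P (fun x => (α : ℝ≥0∞) * h x + ((1 - α : ℝ≥0) : ℝ≥0∞))
          ≤ α * P h + (1 - α : ℝ≥0) := hsub.apply_mul_add_const_le hP hh α (1 - α)
      _ ≤ α * 1 + (1 - α : ℝ≥0) := by gcongr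
      _ = 1 := by rw [mul_one, ← ENNReal.coe_add, add_tsub_cancel_of_le hα, ENNReal.coe_one]
  · intro hconv h hh
    refine ENNReal.le_of_forall_pos_le_add fun ε hε hfin => ?_
    obtain ⟨p, hp⟩ : ∃ p : ℝ≥0, p = P h :=
      WithTop.ne_top_iff_exists.1 (ENNReal.add_lt_top.1 hfin).2.ne
    have hPh : P h ≤ (p + ε : ℝ≥0) := by simp [← hp]
    simpa [← hp, add_assoc] using hP.apply_one_add_le_of_apply_le hconv hh (by positivity) hPh

/-- a prevision `P` is subnormalized iff for every `α ∈ (0,1]` and every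
lower semicontinuous `h`, `P(α·h + (1−α)·𝟙) > 1` implies `P(h) > 1`. -/
theorem statement8 {X : Type*} [TopologicalSpace X] (P : (X → ℝ≥0∞) → ℝ≥0∞)
    (hP : IsPrevision P) :
    PSubnormalized P ↔
      ∀ α : ℝ≥0, 0 < α → α ≤ 1 → ∀ h : X → ℝ≥0∞, LowerSemicontinuous h →
        1 < P (fun x => (α : ℝ≥0∞) * h x + ((1 - α : ℝ≥0) : ℝ≥0∞)) → 1 < P h :=
  statement8_general hP.pHomogeneous
end

section
/- Let X be a topological space, P a subnormalized prevision on X, and F₀ a superlinear prevision on X with F₀ ≤ P pointwise. Then there exists a subnormalized superlinear prevision F on X with F₀ ≤ F ≤ P pointwise. -/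
open scoped ENNReal NNReal

/-!
The witness is `F h = ⨆ a, F₀ (a + h) - a`, over all real constants `a ≥ 0`. Taking `a = 0` gives
`F₀ ≤ F`. Replacing `h` by `1 + h` amounts to reindexing `a` as `a + 1`, which costs `1`, so `F` is
subnormalized whatever `F₀` is. Finally `F₀ (a + h) ≤ P (a + h) ≤ a + P h`, so `F ≤ P`.
-/

/-- Monotonicity of a functional on lower semicontinuous maps. -/
def PMonotone {X : Type*} [TopologicalSpace X] (F : (X → ℝ≥0∞) → ℝ≥0∞) : Prop :=
  ∀ ⦃h h' : X → ℝ≥0∞⦄, LowerSemicontinuous h → LowerSemicontinuous h' → h ≤ h' → F h ≤ F h'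

/-- Preservation of directed suprema of lower semicontinuous maps. -/
def PScottContinuous {X : Type*} [TopologicalSpace X] (F : (X → ℝ≥0∞) → ℝ≥0∞) : Prop :=
  ∀ D : Set (X → ℝ≥0∞), D.Nonempty → (∀ h ∈ D, LowerSemicontinuous h) →
    DirectedOn (· ≤ ·) D → F (fun x => ⨆ h ∈ D, h x) = ⨆ h ∈ D, F h

/-- The least functional `G ≥ F` with `G (a + h) ≤ a + G h` for all real constants `a ≥ 0`. The
truncated subtraction does no harm: `a` is finite, so `∞ - ∞` never occurs, and the term at `a = 0`
is nonnegative, so negative differences would not contribute to the supremum. -/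
noncomputable def subnormalize {X : Type*} (F : (X → ℝ≥0∞) → ℝ≥0∞) (h : X → ℝ≥0∞) : ℝ≥0∞ :=
  ⨆ a : ℝ≥0, F (fun x => (a : ℝ≥0∞) + h x) - a

theorem tsub_add_tsub_le_max {α : Type*} [AddCommMonoid α] [LinearOrder α]
    [CanonicallyOrderedAdd α] [Sub α] [OrderedSub α] {a b : α}
    (ha : AddLECancellable a) (hb : AddLECancellable b) (x y : α) :
    x - a + (y - b) ≤ max (max (x - a) (y - b)) (x + y - (a + b)) := by
  rcases le_total x a with hxa | hax
  · simp [tsub_eq_zero_of_le hxa]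
  rcases le_total y b with hyb | hby
  · simp [tsub_eq_zero_of_le hyb]
  · exact (ha.tsub_add_tsub_comm hb hax hby).le.trans (le_max_right _ _)

section Subnormalize

variable {X : Type*} {F : (X → ℝ≥0∞) → ℝ≥0∞}

theorem coe_add_sub_le_subnormalize (F : (X → ℝ≥0∞) → ℝ≥0∞) (a : ℝ≥0) (h : X → ℝ≥0∞) :
    F (fun x => (a : ℝ≥0∞) + h x) - a ≤ subnormalize F h :=
  le_iSup (fun a : ℝ≥0 => F (fun x => (a : ℝ≥0∞) + h x) - a) a

theorem le_subnormalize (F : (X → ℝ≥0∞) → ℝ≥0∞) (h : X → ℝ≥0∞) : F h ≤ subnormalize F h := by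
  simpa using coe_add_sub_le_subnormalize F 0 h

theorem subnormalize_one_add_le (F : (X → ℝ≥0∞) → ℝ≥0∞) (h : X → ℝ≥0∞) :
    subnormalize F (fun x => 1 + h x) ≤ 1 + subnormalize F h := by
  refine iSup_le fun a => tsub_le_iff_left.2 ?_
  calc F (fun x => (a : ℝ≥0∞) + (1 + h x))
      = F (fun x => ((a + 1 : ℝ≥0) : ℝ≥0∞) + h x) := by simp [add_assoc]
    _ ≤ ((a + 1 : ℝ≥0) : ℝ≥0∞) + subnormalize F h :=
        tsub_le_iff_left.1 (coe_add_sub_le_subnormalize F (a + 1) h)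
    _ = a + (1 + subnormalize F h) := by simp [add_assoc]

variable [TopologicalSpace X]

theorem pSubnormalized_subnormalize (F : (X → ℝ≥0∞) → ℝ≥0∞) :
    PSubnormalized (subnormalize F) :=
  fun h _ => subnormalize_one_add_le F h

theorem lowerSemicontinuous_coe_add (a : ℝ≥0) {h : X → ℝ≥0∞} (hh : LowerSemicontinuous h) :
    LowerSemicontinuous fun x => (a : ℝ≥0∞) + h x :=
  lowerSemicontinuous_const.add hh

theorem lowerSemicontinuous_coe_mul (a : ℝ≥0) {h : X → ℝ≥0∞} (hh : LowerSemicontinuous h) :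
    LowerSemicontinuous fun x => (a : ℝ≥0∞) * h x :=
  (ENNReal.continuous_const_mul ENNReal.coe_ne_top).comp_lowerSemicontinuous hh
    fun _ _ hxy => mul_le_mul_right hxy _

theorem PMonotone.subnormalize (hF : PMonotone F) : PMonotone (subnormalize F) :=
  fun _ _ hh hh' hle => iSup_mono fun a => tsub_le_tsub_right
    (hF (lowerSemicontinuous_coe_add a hh) (lowerSemicontinuous_coe_add a hh')
      fun x => add_le_add_right (hle x) _) _

theorem PScottContinuous.coe_add (hF : PScottContinuous F) (a : ℝ≥0) :
    PScottContinuous fun h => F (fun x => (a : ℝ≥0∞) + h x) := by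
  intro D hne hD hdir
  have hdir_add : DirectedOn (· ≤ ·) ((fun h x => (a : ℝ≥0∞) + h x) '' D) :=
    directedOn_image.2 <| hdir.mono fun _ _ hle x => add_le_add_right (hle x) _
  have hsup := hF _ (hne.image _)
    (Set.forall_mem_image.2 fun h hh => lowerSemicontinuous_coe_add a (hD h hh)) hdir_add
  simpa only [iSup_image, ENNReal.add_biSup hne] using hsup

theorem PScottContinuous.subnormalize (hF : PScottContinuous F) :
    PScottContinuous (subnormalize F) := by
  intro D hne hD hdir
  calc ⨆ a : ℝ≥0, F (fun x => (a : ℝ≥0∞) + ⨆ h ∈ D, h x) - a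
      = ⨆ a : ℝ≥0, ⨆ h ∈ D, F (fun x => (a : ℝ≥0∞) + h x) - a := by
        simp only [hF.coe_add _ D hne hD hdir, ENNReal.iSup_sub]
    _ = ⨆ h ∈ D, ⨆ a : ℝ≥0, F (fun x => (a : ℝ≥0∞) + h x) - a := by
        rw [iSup_comm]
        exact iSup_congr fun h => iSup_comm

theorem PHomogeneous.subnormalize_zero (hF : PHomogeneous F) (hF1 : F (fun _ => 1) ≤ 1) :
    subnormalize F (fun _ => 0) = 0 := by
  refine nonpos_iff_eq_zero.1 (iSup_le fun a => tsub_le_iff_left.2 ?_)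
  calc F (fun _ => (a : ℝ≥0∞) + 0) = a * F (fun _ => 1) := by
        simpa using hF a (fun _ => 1) lowerSemicontinuous_const
    _ ≤ a * 1 := by gcongr
    _ = a + 0 := by simp

theorem PHomogeneous.subnormalize (hF : PHomogeneous F) (hF1 : F (fun _ => 1) ≤ 1) :
    PHomogeneous (subnormalize F) := by
  intro c h hh
  rcases eq_or_ne c 0 with rfl | hc
  · simpa using hF.subnormalize_zero hF1
  calc ⨆ a : ℝ≥0, F (fun x => (a : ℝ≥0∞) + c * h x) - a
      = ⨆ a : ℝ≥0, F (fun x => ((c * a : ℝ≥0) : ℝ≥0∞) + c * h x) - (c * a : ℝ≥0) :=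
        ((Equiv.mulLeft₀ c hc).iSup_comp
          (g := fun a : ℝ≥0 => F (fun x => (a : ℝ≥0∞) + c * h x) - a)).symm
    _ = ⨆ a : ℝ≥0, c * (F (fun x => (a : ℝ≥0∞) + h x) - a) := by
        refine iSup_congr fun a => ?_
        rw [ENNReal.mul_sub fun _ _ => ENNReal.coe_ne_top,
          ← hF _ _ (lowerSemicontinuous_coe_add a hh)]
        simp only [ENNReal.coe_mul, mul_add]
    _ = c * ⨆ a : ℝ≥0, F (fun x => (a : ℝ≥0∞) + h x) - a := (ENNReal.mul_iSup ..).symm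

theorem IsPrevision.subnormalize (hF : IsPrevision F) (hF1 : F (fun _ => 1) ≤ 1) :
    IsPrevision (subnormalize F) :=
  ⟨PMonotone.subnormalize hF.1, PScottContinuous.subnormalize hF.2.1,
    PHomogeneous.subnormalize hF.2.2 hF1⟩

theorem PSuperlinear.subnormalize (hF : PSuperlinear F) (hmono : PMonotone F) :
    PSuperlinear (subnormalize F) := by
  intro h h' hh hh'
  refine ENNReal.iSup_add_iSup_le fun a b => ?_
  have hab : F (fun x => (a : ℝ≥0∞) + h x) + F (fun x => (b : ℝ≥0∞) + h' x)
      ≤ F (fun x => ((a + b : ℝ≥0) : ℝ≥0∞) + (h x + h' x)) := by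
    simpa only [ENNReal.coe_add, add_add_add_comm] using
      hF _ _ (lowerSemicontinuous_coe_add a hh) (lowerSemicontinuous_coe_add b hh')
  refine (tsub_add_tsub_le_max (ENNReal.cancel_of_ne ENNReal.coe_ne_top)
    (ENNReal.cancel_of_ne ENNReal.coe_ne_top) _ _).trans (max_le (max_le ?_ ?_) ?_)
  · exact (coe_add_sub_le_subnormalize F a h).trans
      (hmono.subnormalize hh (hh.add hh') fun _ => le_self_add)
  · exact (coe_add_sub_le_subnormalize F b h').trans
      (hmono.subnormalize hh' (hh.add hh') fun _ => le_add_self)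
  · rw [← ENNReal.coe_add]
    exact (tsub_le_tsub_right hab _).trans (coe_add_sub_le_subnormalize F (a + b) _)

end Subnormalize

section Subnormalized

variable {X : Type*} [TopologicalSpace X] {F P : (X → ℝ≥0∞) → ℝ≥0∞}

theorem PSubnormalized.coe_add_le (hP : PSubnormalized P) (hhom : PHomogeneous P) (a : ℝ≥0)
    {h : X → ℝ≥0∞} (hh : LowerSemicontinuous h) :
    P (fun x => (a : ℝ≥0∞) + h x) ≤ a + P h := by
  rcases eq_or_ne a 0 with rfl | ha
  · simp
  have hmul_inv (t : ℝ≥0∞) : (a : ℝ≥0∞) * (1 + (a⁻¹ : ℝ≥0) * t) = a + t := by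
    rw [mul_add, mul_one, ← mul_assoc, ← ENNReal.coe_mul, mul_inv_cancel₀ ha, ENNReal.coe_one,
      one_mul]
  have hscaled := lowerSemicontinuous_coe_mul a⁻¹ hh
  calc P (fun x => (a : ℝ≥0∞) + h x)
      = P (fun x => (a : ℝ≥0∞) * (1 + (a⁻¹ : ℝ≥0) * h x)) := by simp only [hmul_inv]
    _ = a * P (fun x => 1 + (a⁻¹ : ℝ≥0) * h x) := hhom a _ (lowerSemicontinuous_const.add hscaled)
    _ ≤ a * (1 + P (fun x => (a⁻¹ : ℝ≥0) * h x)) := by gcongr; exact hP _ hscaled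
    _ = a + P h := by rw [hhom _ _ hh, hmul_inv]

theorem PSubnormalized.one_le_one (hP : PSubnormalized P) (hhom : PHomogeneous P) :
    P (fun _ => 1) ≤ 1 := by
  have hP0 : P (fun _ => 0) = 0 := by simpa using hhom 0 (fun _ => 0) lowerSemicontinuous_const
  simpa [hP0] using hP (fun _ => 0) lowerSemicontinuous_const

theorem PSubnormalized.subnormalize_le (hP : PSubnormalized P) (hhom : PHomogeneous P)
    (hle : ∀ h : X → ℝ≥0∞, LowerSemicontinuous h → F h ≤ P h)
    {h : X → ℝ≥0∞} (hh : LowerSemicontinuous h) : subnormalize F h ≤ P h :=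
  iSup_le fun a => tsub_le_iff_left.2 <|
    (hle _ (lowerSemicontinuous_coe_add a hh)).trans (hP.coe_add_le hhom a hh)

end Subnormalized

theorem statement9_general {X : Type*} [TopologicalSpace X] (P F₀ : (X → ℝ≥0∞) → ℝ≥0∞)
    (hP : PHomogeneous P) (hPsn : PSubnormalized P)
    (hF₀ : IsPrevision F₀) (hF₀sup : PSuperlinear F₀)
    (hle : ∀ h : X → ℝ≥0∞, LowerSemicontinuous h → F₀ h ≤ P h) :
    ∃ F : (X → ℝ≥0∞) → ℝ≥0∞, IsPrevision F ∧ PSuperlinear F ∧ PSubnormalized F ∧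
      (∀ h : X → ℝ≥0∞, LowerSemicontinuous h → F₀ h ≤ F h) ∧
      (∀ h : X → ℝ≥0∞, LowerSemicontinuous h → F h ≤ P h) := by
  have hF₀1 : F₀ (fun _ => 1) ≤ 1 :=
    (hle _ lowerSemicontinuous_const).trans (hPsn.one_le_one hP)
  exact ⟨subnormalize F₀, hF₀.subnormalize hF₀1, hF₀sup.subnormalize hF₀.1,
    pSubnormalized_subnormalize F₀, fun h _ => le_subnormalize F₀ h,
    fun _ hh => hPsn.subnormalize_le hP hle hh⟩

/-- given a subnormalized prevision `P` and a superlinear prevision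
`F₀ ≤ P` (pointwise on lower semicontinuous maps), there is a subnormalized
superlinear prevision `F` with `F₀ ≤ F ≤ P`. -/
theorem statement9 {X : Type*} [TopologicalSpace X] (P F₀ : (X → ℝ≥0∞) → ℝ≥0∞)
    (hP : IsPrevision P) (hPsn : PSubnormalized P)
    (hF₀ : IsPrevision F₀) (hF₀sup : PSuperlinear F₀)
    (hle : ∀ h : X → ℝ≥0∞, LowerSemicontinuous h → F₀ h ≤ P h) :
    ∃ F : (X → ℝ≥0∞) → ℝ≥0∞, IsPrevision F ∧ PSuperlinear F ∧ PSubnormalized F ∧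
      (∀ h : X → ℝ≥0∞, LowerSemicontinuous h → F₀ h ≤ F h) ∧
      (∀ h : X → ℝ≥0∞, LowerSemicontinuous h → F h ≤ P h) :=
  statement9_general P F₀ hP.2.2 hPsn hF₀ hF₀sup hle
end

section
/- Let X be a topological space and P a prevision on X. The following are equivalent: (1) P(𝟙+h) ≥ 1+P(h) for every h ∈ ℒX; (2) P(𝟙) ≥ 1 and for every α ∈ (0,1] and every h ∈ ℒX, P(α·h + (1−α)·𝟙) ≤ 1 implies P(h) ≤ 1. -/
open scoped ENNReal NNReal

/-!
Homogeneity turns condition (1) into `β + α P(h) ≤ P(α h + β 𝟙)` for all `α, β ≥ 0`; with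
`α + β = 1` this gives (2). Conversely, if `P(𝟙 + h) ≤ 1 + r` with `r > 0`, then
`(1 + r)⁻¹ (𝟙 + h)` is the convex combination `α (r⁻¹ h) + (1 - α) 𝟙` with `α = r / (1 + r)`,
so (2) yields `P(h) ≤ r`. Since `P(𝟙 + h) ≥ P(𝟙) ≥ 1`, we may let `1 + r` decrease to `P(𝟙 + h)`.
The argument lives in an abstract cone `M`, where an element `u` plays the role of `𝟙`.
-/

section Cone

variable {M : Type*} [AddCommMonoid M] [Module ℝ≥0 M] {P : M →[ℝ≥0] ℝ≥0∞} {u : M}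

theorem coe_add_smul_map_le_map_smul_add_smul (hP : ∀ h, 1 + P h ≤ P (u + h)) (α β : ℝ≥0)
    (h : M) : β + α • P h ≤ P (α • h + β • u) := by
  rcases eq_or_ne β 0 with rfl | hβ
  · simp [map_smul]
  have hα : β • (α / β) • h = α • h := by rw [smul_smul, mul_div_cancel₀ α hβ]
  calc (β : ℝ≥0∞) + α • P h
      = β • (1 + P ((α / β) • h)) := by
        rw [smul_add, ← map_smul, ← map_smul, hα, ENNReal.smul_def, smul_eq_mul, mul_one]
    _ ≤ β • P (u + (α / β) • h) := by gcongr; exact hP _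
    _ = P (α • h + β • u) := by rw [← map_smul, smul_add, hα, add_comm]

theorem map_le_one_of_map_smul_add_smul_le_one (hP : ∀ h, 1 + P h ≤ P (u + h)) {α β : ℝ≥0}
    (hα : 0 < α) (hαβ : α + β = 1) {h : M} (hle : P (α • h + β • u) ≤ 1) : P h ≤ 1 := by
  have hadd : (β : ℝ≥0∞) + α * P h ≤ β + α * 1 :=
    calc (β : ℝ≥0∞) + α * P h ≤ P (α • h + β • u) :=
          coe_add_smul_map_le_map_smul_add_smul hP α β h
      _ ≤ 1 := hle
      _ = β + α * 1 := by rw [mul_one, add_comm]; exact_mod_cast hαβ.symm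
  have hmul := (ENNReal.add_le_add_iff_left ENNReal.coe_ne_top).1 hadd
  exact (ENNReal.mul_le_mul_iff_right (ENNReal.coe_ne_zero.2 hα.ne') ENNReal.coe_ne_top).1 hmul

theorem map_le_of_map_add_le_one_add
    (hP : ∀ α : ℝ≥0, 0 < α → α ≤ 1 → ∀ h, P (α • h + (1 - α) • u) ≤ 1 → P h ≤ 1)
    {r : ℝ≥0} (hr : 0 < r) {h : M} (hle : P (u + h) ≤ 1 + r) : P h ≤ r := by
  have hcomb : (r / (1 + r)) • r⁻¹ • h + (1 - r / (1 + r)) • u = (1 + r)⁻¹ • (u + h) := by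
    have hcoeff : 1 - r / (1 + r) = (1 + r)⁻¹ := tsub_eq_of_eq_add (by field_simp)
    have hmul : r / (1 + r) * r⁻¹ = (1 + r)⁻¹ := by field_simp
    rw [hcoeff, smul_smul, hmul, ← smul_add, add_comm h u]
  have hone : P ((1 + r)⁻¹ • (u + h)) ≤ 1 :=
    calc P ((1 + r)⁻¹ • (u + h)) = (1 + r)⁻¹ • P (u + h) := map_smul ..
      _ ≤ (1 + r)⁻¹ • (1 + r : ℝ≥0∞) := by gcongr
      _ = 1 := by
        rw [ENNReal.smul_def, smul_eq_mul]
        exact_mod_cast inv_mul_cancel₀ (by positivity : 1 + r ≠ 0)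
  have hscaled : P (r⁻¹ • h) ≤ 1 :=
    hP (r / (1 + r)) (by positivity) (div_le_one_of_le₀ le_add_self (by positivity)) _
      (hcomb ▸ hone)
  calc P h = r • P (r⁻¹ • h) := by rw [← map_smul, smul_inv_smul₀ hr.ne']
    _ ≤ r • (1 : ℝ≥0∞) := by gcongr
    _ = r := by rw [ENNReal.smul_def, smul_eq_mul, mul_one]

theorem one_add_map_le_map_add
    (hP : ∀ α : ℝ≥0, 0 < α → α ≤ 1 → ∀ h, P (α • h + (1 - α) • u) ≤ 1 → P h ≤ 1)
    {h : M} (hone : 1 ≤ P (u + h)) : 1 + P h ≤ P (u + h) := by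
  obtain ⟨c, hc⟩ := exists_add_of_le hone
  rw [hc]
  gcongr
  refine ENNReal.le_of_forall_pos_le_add fun ε hε hctop => ?_
  lift c to ℝ≥0 using hctop.ne
  have hle : P (u + h) ≤ 1 + (c + ε : ℝ≥0) := by
    rw [hc]
    gcongr
    exact le_self_add
  exact_mod_cast map_le_of_map_add_le_one_add hP (by positivity) hle

theorem statement10_general (P : M →[ℝ≥0] ℝ≥0∞) (u : M) (hu : ∀ h, P u ≤ P (u + h)) :
    (∀ h, 1 + P h ≤ P (u + h)) ↔
      1 ≤ P u ∧ ∀ α : ℝ≥0, 0 < α → α ≤ 1 → ∀ h, P (α • h + (1 - α) • u) ≤ 1 → P h ≤ 1 := by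
  refine ⟨fun hP => ⟨?_, fun α hα hα1 h => ?_⟩, fun ⟨hone, hP⟩ h => ?_⟩
  · simpa using le_self_add.trans (hP 0)
  · exact map_le_one_of_map_smul_add_smul_le_one hP hα (add_tsub_cancel_of_le hα1)
  · exact one_add_map_le_map_add hP (hone.trans (hu h))

end Cone

section LowerSemicontinuous

variable (X : Type*) [TopologicalSpace X]

/-- The cone `ℒX` of lower semicontinuous functions `X → [0, ∞]`, as an `ℝ≥0`-submodule of all
functions, so that a prevision restricts to an equivariant map on it. -/
def lscSubmodule : Submodule ℝ≥0 (X → ℝ≥0∞) where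
  carrier := {h | LowerSemicontinuous h}
  zero_mem' := lowerSemicontinuous_const
  add_mem' := LowerSemicontinuous.add
  smul_mem' a _ hh :=
    (ENNReal.continuous_const_mul ENNReal.coe_ne_top).comp_lowerSemicontinuous hh
      fun _ _ hxy => mul_le_mul_right hxy (a : ℝ≥0∞)

variable {X}

theorem mem_lscSubmodule {h : X → ℝ≥0∞} : h ∈ lscSubmodule X ↔ LowerSemicontinuous h :=
  Iff.rfl

/-- The restriction of a prevision to `ℒX`, with homogeneity bundled as `ℝ≥0`-equivariance. -/
def IsPrevision.toMulActionHom {P : (X → ℝ≥0∞) → ℝ≥0∞} (hP : IsPrevision P) :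
    lscSubmodule X →[ℝ≥0] ℝ≥0∞ where
  toFun h := P h
  map_smul' a h := hP.2.2 a h h.2

theorem IsPrevision.toMulActionHom_apply {P : (X → ℝ≥0∞) → ℝ≥0∞} (hP : IsPrevision P)
    (h : lscSubmodule X) : hP.toMulActionHom h = P h :=
  rfl

theorem IsPrevision.map_one_le_map_one_add {P : (X → ℝ≥0∞) → ℝ≥0∞} (hP : IsPrevision P)
    {h : X → ℝ≥0∞} (hh : LowerSemicontinuous h) : P 1 ≤ P (1 + h) :=
  hP.1 lowerSemicontinuous_const (lowerSemicontinuous_const.add hh) fun _ => le_self_add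

end LowerSemicontinuous

/-- for a prevision `P`, the following are equivalent:
(1) `P(𝟙+h) ≥ 1+P(h)` for every lower semicontinuous `h`;
(2) `P(𝟙) ≥ 1` and for every `α ∈ (0,1]` and lower semicontinuous `h`,
`P(α·h + (1−α)·𝟙) ≤ 1` implies `P(h) ≤ 1`. -/
theorem statement10 {X : Type*} [TopologicalSpace X] (P : (X → ℝ≥0∞) → ℝ≥0∞)
    (hP : IsPrevision P) :
    (∀ h : X → ℝ≥0∞, LowerSemicontinuous h → 1 + P h ≤ P (fun x => 1 + h x)) ↔
      (1 ≤ P (fun _ => 1) ∧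
        ∀ α : ℝ≥0, 0 < α → α ≤ 1 → ∀ h : X → ℝ≥0∞, LowerSemicontinuous h →
          P (fun x => (α : ℝ≥0∞) * h x + ((1 - α : ℝ≥0) : ℝ≥0∞)) ≤ 1 → P h ≤ 1) := by
  simpa [IsPrevision.toMulActionHom_apply, mem_lscSubmodule, Pi.add_def, Pi.one_def,
    Pi.smul_def, ENNReal.smul_def] using statement10_general hP.toMulActionHom
      ⟨1, lowerSemicontinuous_const⟩ fun h => hP.map_one_le_map_one_add h.2
end

section
/- Let X be a topological space, P a normalized prevision on X, and F₀ a subnormalized sublinear prevision on X with P ≤ F₀ pointwise and F₀(𝟙) ≥ 1. Then there exists a normalized sublinear prevision F on X with P ≤ F ≤ F₀ pointwise. -/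
open scoped ENNReal NNReal

/-!
Let `F` be the supremum of all Scott-continuous functionals `φ ≤ F₀` such that
`a + φ h ≤ φ (a • 𝟙 + h)`. This family is closed under nonempty suprema and rescaling, and it
contains `P`, so `F` is its largest element, `P ≤ F ≤ F₀`, and `F` is homogeneous.

Subadditivity is a bootstrap on maximality: if `F (k + h) ≤ F₀ k + c` for all `k`, then
`k ↦ max (P k) (F (k + h) - c)` belongs to the family, so `F (k + h) ≤ F k + c` for all `k`.
Subadditivity of `F₀` allows `c = F₀ h`, and the resulting inequality `F (k + h) ≤ F k + F₀ h`,
with the roles of `h` and `k` exchanged, allows `c = F h`.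
-/

section ScottContinuous

theorem scottContinuous_ennreal_tsub_right (c : ℝ≥0∞) : ScottContinuous fun x : ℝ≥0∞ => x - c :=
  .of_map_sSup fun d _ _ => by rw [sSup_image, sSup_eq_iSup]; simp only [ENNReal.iSup_sub]

theorem scottContinuous_sSup {α β : Type*} [Preorder α] [CompleteLattice β] {S : Set (α → β)}
    (hS : ∀ f ∈ S, ScottContinuous f) : ScottContinuous (sSup S) := by
  intro d hd hdir a ha
  refine ⟨?_, fun b hb => ?_⟩
  · rintro _ ⟨x, hx, rfl⟩
    rw [sSup_apply, sSup_apply]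
    exact iSup_mono fun f => (hS f f.2).monotone (ha.1 hx)
  · rw [sSup_apply]
    refine iSup_le fun f => (hS f f.2 hd hdir ha).2 ?_
    rintro _ ⟨x, hx, rfl⟩
    exact (le_sSup f.2 x).trans (hb ⟨x, hx, rfl⟩)

end ScottContinuous

/-- A preordered cone whose translations and scalings are Scott-continuous. It is weaker than a
d-cone: directed suprema need not exist, and continuity in the scalar is not required. -/
class IsScottCone (C : Type*) [AddCommMonoid C] [Preorder C] [Module ℝ≥0 C] : Prop where
  scottContinuous_add_right (h : C) : ScottContinuous fun k : C => k + h
  scottContinuous_smul (a : ℝ≥0) : ScottContinuous fun k : C => a • k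

open IsScottCone

instance : IsScottCone ℝ≥0∞ where
  scottContinuous_add_right c := .of_map_sSup fun d hd _ => by
    rw [sSup_image, sSup_eq_iSup, ENNReal.biSup_add hd]
  scottContinuous_smul a := .of_map_sSup fun d _ _ => by
    rw [sSup_image, sSup_eq_iSup]
    simp only [ENNReal.smul_def, smul_eq_mul, ENNReal.mul_iSup]

section Cone

variable {C : Type*} [AddCommMonoid C] [Module ℝ≥0 C] {e : C} {P F₀ φ : C → ℝ≥0∞}

theorem map_smul_of_map_smul_le (hzero : φ 0 = 0)
    (hle : ∀ a : ℝ≥0, a ≠ 0 → ∀ h, φ (a • h) ≤ a • φ h) (a : ℝ≥0) (h : C) :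
    φ (a • h) = a • φ h := by
  rcases eq_or_ne a 0 with rfl | ha
  · simp only [zero_smul, hzero]
  refine (hle a ha h).antisymm ?_
  calc a • φ h = a • φ (a⁻¹ • a • h) := by rw [inv_smul_smul₀ ha]
    _ ≤ a • a⁻¹ • φ (a • h) := by gcongr; exact hle _ (inv_ne_zero ha) _
    _ = φ (a • h) := smul_inv_smul₀ ha _

theorem map_smul_add_of_map_add (hsmul : ∀ (a : ℝ≥0) h, φ (a • h) = a • φ h)
    (hadd : ∀ h, φ (e + h) = 1 + φ h) (a : ℝ≥0) (h : C) : φ (a • e + h) = a + φ h := by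
  rcases eq_or_ne a 0 with rfl | ha
  · simp
  calc φ (a • e + h) = φ (a • (e + a⁻¹ • h)) := by rw [smul_add, smul_inv_smul₀ ha]
    _ = a • (1 + a⁻¹ • φ h) := by rw [hsmul, hadd, hsmul]
    _ = a + φ h := by rw [smul_add, smul_inv_smul₀ ha, ENNReal.smul_def, smul_eq_mul, mul_one]

variable [Preorder C]

/-- The Scott-continuous functionals below `F₀` that grow at least at unit rate in the direction
`e`, the abstract counterpart of the constant function `𝟙`. -/
structure IsShiftMinorant (e : C) (F₀ φ : C → ℝ≥0∞) : Prop where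
  scottContinuous : ScottContinuous φ
  le : φ ≤ F₀
  add_le_map (a : ℝ≥0) (h : C) : a + φ h ≤ φ (a • e + h)

/-- The pointwise supremum of all shift minorants of `F₀`, itself a shift minorant as soon as there
is one. -/
noncomputable def shiftEnvelope (e : C) (F₀ : C → ℝ≥0∞) : C → ℝ≥0∞ :=
  sSup {φ | IsShiftMinorant e F₀ φ}

theorem shiftEnvelope_le : shiftEnvelope e F₀ ≤ F₀ :=
  sSup_le fun _ hφ => hφ.le

theorem IsShiftMinorant.le_shiftEnvelope (hφ : IsShiftMinorant e F₀ φ) :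
    φ ≤ shiftEnvelope e F₀ :=
  le_sSup hφ

theorem isShiftMinorant_shiftEnvelope (hP : IsShiftMinorant e F₀ P) :
    IsShiftMinorant e F₀ (shiftEnvelope e F₀) where
  scottContinuous := scottContinuous_sSup fun _ hφ => hφ.scottContinuous
  le := shiftEnvelope_le
  add_le_map a h := by
    have : Nonempty {φ | IsShiftMinorant e F₀ φ} := ⟨P, hP⟩
    simp only [shiftEnvelope, sSup_apply, ENNReal.add_iSup]
    exact iSup_mono fun φ => φ.2.add_le_map a h

variable [IsScottCone C]

theorem IsShiftMinorant.inv_smul_map_smul (hF₀ : ∀ (a : ℝ≥0) h, F₀ (a • h) = a • F₀ h)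
    (hφ : IsShiftMinorant e F₀ φ) {b : ℝ≥0} (hb : b ≠ 0) :
    IsShiftMinorant e F₀ fun h => b⁻¹ • φ (b • h) where
  scottContinuous := ((scottContinuous_smul b).comp hφ.scottContinuous).comp
    (scottContinuous_smul b⁻¹)
  le h := calc
    b⁻¹ • φ (b • h) ≤ b⁻¹ • F₀ (b • h) := by gcongr; exact hφ.le _
    _ = F₀ h := by rw [hF₀, inv_smul_smul₀ hb]
  add_le_map a h := calc
    a + b⁻¹ • φ (b • h) = b⁻¹ • (((b * a : ℝ≥0) : ℝ≥0∞) + φ (b • h)) := by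
      rw [smul_add, ENNReal.coe_mul, ← smul_eq_mul, ← ENNReal.smul_def, inv_smul_smul₀ hb]
    _ ≤ b⁻¹ • φ ((b * a) • e + b • h) := by gcongr; exact hφ.add_le_map _ _
    _ = b⁻¹ • φ (b • (a • e + h)) := by rw [smul_add, mul_smul]

/- The maximum with `P` is needed where the truncated difference vanishes: there
`k ↦ φ (k + h) - c` alone need not grow in the direction `e`. -/
theorem IsShiftMinorant.sup_tsub {G₀ : C → ℝ≥0∞} (hP : IsShiftMinorant e F₀ P)
    (hφ : IsShiftMinorant e G₀ φ) {h : C} {c : ℝ≥0∞} (hle : ∀ k, φ (k + h) ≤ F₀ k + c) :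
    IsShiftMinorant e F₀ fun k => P k ⊔ (φ (k + h) - c) where
  scottContinuous := (hP.scottContinuous.prodMk
    (((scottContinuous_add_right h).comp hφ.scottContinuous).comp
      (scottContinuous_ennreal_tsub_right c))).comp ScottContinuous.sup₂
  le k := sup_le (hP.le k) (tsub_le_iff_right.2 (hle k))
  add_le_map a k := by
    rcases le_or_gt (φ (k + h)) c with hc | hc
    · rw [tsub_eq_zero_of_le hc, ← bot_eq_zero, sup_bot_eq]
      exact (hP.add_le_map a k).trans le_sup_left
    have hshift : a + (φ (k + h) - c) ≤ φ (a • e + k + h) - c := calc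
      a + (φ (k + h) - c) = a + φ (k + h) - c :=
        ((ENNReal.cancel_of_lt hc.lt_top).add_tsub_assoc_of_le hc.le _).symm
      _ ≤ φ (a • e + k + h) - c := by
        rw [add_assoc]
        exact tsub_le_tsub_right (hφ.add_le_map a _) c
    rw [← max_add_add_left]
    exact sup_le_sup (hP.add_le_map a k) hshift

theorem shiftEnvelope_add_le_of_le (hP : IsShiftMinorant e F₀ P) {h : C} {c : ℝ≥0∞}
    (hle : ∀ k, shiftEnvelope e F₀ (k + h) ≤ F₀ k + c) (k : C) :
    shiftEnvelope e F₀ (k + h) ≤ shiftEnvelope e F₀ k + c :=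
  tsub_le_iff_right.1 <| le_sup_right.trans <|
    (hP.sup_tsub (isShiftMinorant_shiftEnvelope hP) hle).le_shiftEnvelope k

theorem shiftEnvelope_add_le (hP : IsShiftMinorant e F₀ P)
    (hF₀ : ∀ h k, F₀ (h + k) ≤ F₀ h + F₀ k) (h k : C) :
    shiftEnvelope e F₀ (h + k) ≤ shiftEnvelope e F₀ h + shiftEnvelope e F₀ k := by
  have one_sided (h k : C) : shiftEnvelope e F₀ (h + k) ≤ shiftEnvelope e F₀ h + F₀ k :=
    shiftEnvelope_add_le_of_le hP (fun _ => (shiftEnvelope_le _).trans (hF₀ _ _)) h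
  refine shiftEnvelope_add_le_of_le hP (fun h => ?_) h
  rw [add_comm h k, add_comm (F₀ h)]
  exact one_sided k h

theorem shiftEnvelope_smul (hF₀ : ∀ (a : ℝ≥0) h, F₀ (a • h) = a • F₀ h) (a : ℝ≥0)
    (h : C) : shiftEnvelope e F₀ (a • h) = a • shiftEnvelope e F₀ h := by
  have hF₀_zero : F₀ 0 = 0 := by simpa only [zero_smul] using hF₀ 0 0
  refine map_smul_of_map_smul_le ?_ (fun b hb k => ?_) a h
  · exact le_bot_iff.1 ((shiftEnvelope_le 0).trans_eq hF₀_zero)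
  rw [shiftEnvelope, sSup_apply, iSup_le_iff]
  rintro ⟨φ, hφ⟩
  calc φ (b • k) = b • b⁻¹ • φ (b • k) := (smul_inv_smul₀ hb _).symm
    _ ≤ b • shiftEnvelope e F₀ k := by
      gcongr
      exact (hφ.inv_smul_map_smul hF₀ hb).le_shiftEnvelope k

theorem statement11_general (hP : ScottContinuous P)
    (hP_shift : ∀ (a : ℝ≥0) h, a + P h ≤ P (a • e + h))
    (hF₀_smul : ∀ (a : ℝ≥0) h, F₀ (a • h) = a • F₀ h)
    (hF₀_add : ∀ h k, F₀ (h + k) ≤ F₀ h + F₀ k) (hF₀_unit : F₀ e ≤ 1) (hle : P ≤ F₀) :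
    ∃ F : C → ℝ≥0∞, ScottContinuous F ∧ (∀ (a : ℝ≥0) h, F (a • h) = a • F h) ∧
      (∀ h k, F (h + k) ≤ F h + F k) ∧ (∀ h, F (e + h) = 1 + F h) ∧ P ≤ F ∧ F ≤ F₀ := by
  have hP_minorant : IsShiftMinorant e F₀ P := ⟨hP, hle, hP_shift⟩
  have hF := isShiftMinorant_shiftEnvelope hP_minorant
  have hF_add := shiftEnvelope_add_le hP_minorant hF₀_add
  refine ⟨shiftEnvelope e F₀, hF.scottContinuous, shiftEnvelope_smul hF₀_smul, hF_add,
    fun h => le_antisymm ?_ ?_, hP_minorant.le_shiftEnvelope, hF.le⟩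
  · calc shiftEnvelope e F₀ (e + h) ≤ shiftEnvelope e F₀ e + shiftEnvelope e F₀ h := hF_add e h
      _ ≤ 1 + shiftEnvelope e F₀ h := by gcongr; exact (hF.le e).trans hF₀_unit
  · simpa only [ENNReal.coe_one, one_smul] using hF.add_le_map 1 h

end Cone

section LowerSemicontinuous

variable {X : Type*} [TopologicalSpace X]

/-- The cone of lower semicontinuous functions `X → [0, ∞]`. -/
def lscCone (X : Type*) [TopologicalSpace X] : Submodule ℝ≥0 (X → ℝ≥0∞) where
  carrier := {h | LowerSemicontinuous h}
  add_mem' := LowerSemicontinuous.add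
  zero_mem' := lowerSemicontinuous_const
  smul_mem' a _ hh := (ENNReal.continuous_const_mul ENNReal.coe_ne_top).comp_lowerSemicontinuous hh
    fun _ _ hxy => mul_le_mul_right hxy (a : ℝ≥0∞)

theorem isLUB_lscCone_iff {d : Set (lscCone X)} {k : lscCone X} :
    IsLUB d k ↔ ∀ x, IsLUB ((fun h : lscCone X => h.1 x) '' d) (k.1 x) := by
  have of_pointwise {l : lscCone X}
      (hl : ∀ x, IsLUB ((fun h : lscCone X => h.1 x) '' d) (l.1 x)) : IsLUB d l :=
    .of_image (f := Subtype.val) Iff.rfl (by simpa only [isLUB_pi, Set.image_image] using hl)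
  refine ⟨fun hk => ?_, of_pointwise⟩
  let pointwiseSup : lscCone X :=
    ⟨fun x => ⨆ h ∈ d, h.1 x, lowerSemicontinuous_biSup fun h _ => h.2⟩
  have hsup (x : X) : IsLUB ((fun h : lscCone X => h.1 x) '' d) (pointwiseSup.1 x) := isLUB_biSup
  rwa [hk.unique (of_pointwise hsup)]

theorem scottContinuous_lscCone_iff {α : Type*} [Preorder α] {f : α → lscCone X} :
    ScottContinuous f ↔ ∀ x, ScottContinuous fun k => (f k).1 x := by
  simp only [ScottContinuous, isLUB_lscCone_iff, Set.image_image]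
  exact ⟨fun hf x _ hd hdir _ ha => hf hd hdir ha x, fun hf _ hd hdir _ ha x => hf x hd hdir ha⟩

theorem scottContinuous_lscCone_apply (x : X) : ScottContinuous fun h : lscCone X => h.1 x :=
  scottContinuous_lscCone_iff.1 .id x

instance : IsScottCone (lscCone X) where
  scottContinuous_add_right h := scottContinuous_lscCone_iff.2 fun x =>
    (scottContinuous_lscCone_apply x).comp (scottContinuous_add_right (h.1 x))
  scottContinuous_smul a := scottContinuous_lscCone_iff.2 fun x =>
    (scottContinuous_lscCone_apply x).comp (scottContinuous_smul a)

variable {F : (X → ℝ≥0∞) → ℝ≥0∞}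

theorem isPrevision_iff :
    IsPrevision F ↔ ScottContinuous (fun h : lscCone X => F h) ∧
      ∀ (a : ℝ≥0) (h : lscCone X), F ↑(a • h) = a • F h := by
  refine ⟨fun ⟨_, hsup, hsmul⟩ => ⟨fun d hd hdir k hk => ?_, fun a h => hsmul a h h.2⟩,
    fun ⟨hF, hsmul⟩ => ⟨fun h h' hh hh' hle => ?_, fun D hD hlsc hdir => ?_,
      fun a h hh => hsmul a ⟨h, hh⟩⟩⟩
  · have hk_eq : k.1 = fun x => ⨆ h ∈ Subtype.val '' d, h x := by
      funext x
      rw [iSup_image]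
      exact (isLUB_lscCone_iff.1 hk x).unique isLUB_biSup
    have hF_eq := hsup (Subtype.val '' d) (hd.image _) (by rintro _ ⟨h, -, rfl⟩; exact h.2)
      (directedOn_image.2 hdir)
    rw [← hk_eq, iSup_image] at hF_eq
    beta_reduce
    rw [hF_eq]
    exact isLUB_biSup
  · exact hF.monotone (show (⟨h, hh⟩ : lscCone X) ≤ ⟨h', hh'⟩ from hle)
  · lift D to Set (lscCone X) using hlsc
    simp only [iSup_image]
    let k : lscCone X := ⟨fun x => ⨆ h ∈ D, h.1 x, lowerSemicontinuous_biSup fun h _ => h.2⟩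
    have hk : IsLUB D k := isLUB_lscCone_iff.2 fun x => isLUB_biSup
    exact (hF hD.of_image (directedOn_image (f := Subtype.val).1 hdir) hk).unique isLUB_biSup

theorem exists_comp_coe_lscCone_eq (G : lscCone X → ℝ≥0∞) :
    ∃ F : (X → ℝ≥0∞) → ℝ≥0∞, (fun h : lscCone X => F h) = G :=
  ⟨Function.extend Subtype.val G 0, funext (Subtype.val_injective.extend_apply G 0)⟩

/-- The constant function `𝟙` as an element of the cone of lower semicontinuous functions. -/
def lscCone.one (X : Type*) [TopologicalSpace X] : lscCone X :=
  ⟨fun _ => 1, lowerSemicontinuous_const⟩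

theorem IsPrevision.map_zero (hF : IsPrevision F) : F (fun _ => 0) = 0 := by
  simpa using hF.2.2 0 (fun _ => 0) lowerSemicontinuous_const

theorem PSubnormalized.map_one_le (hFn : PSubnormalized F) (hF : IsPrevision F) :
    F (lscCone.one X) ≤ 1 := by
  simpa only [lscCone.one, hF.map_zero, add_zero] using hFn (fun _ => 0) lowerSemicontinuous_const

theorem PNormalized.map_smul_one_add (hFn : PNormalized F) (hF : IsPrevision F) (a : ℝ≥0)
    (h : lscCone X) : F ↑(a • lscCone.one X + h) = a + F h :=
  map_smul_add_of_map_add (φ := fun h : lscCone X => F h) (isPrevision_iff.1 hF).2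
    (fun k => hFn k k.2) a h

end LowerSemicontinuous

/-- given a normalized prevision `P` and a subnormalized sublinear
prevision `F₀ ≥ P` (pointwise on lower semicontinuous maps) with `F₀(𝟙) ≥ 1`, there
is a normalized sublinear prevision `F` with `P ≤ F ≤ F₀`. -/
theorem statement11 {X : Type*} [TopologicalSpace X] (P F₀ : (X → ℝ≥0∞) → ℝ≥0∞)
    (hP : IsPrevision P) (hPn : PNormalized P)
    (hF₀ : IsPrevision F₀) (hF₀sub : PSublinear F₀) (hF₀sn : PSubnormalized F₀)
    (hle : ∀ h : X → ℝ≥0∞, LowerSemicontinuous h → P h ≤ F₀ h)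
    (hone : 1 ≤ F₀ (fun _ => 1)) :
    ∃ F : (X → ℝ≥0∞) → ℝ≥0∞, IsPrevision F ∧ PSublinear F ∧ PNormalized F ∧
      (∀ h : X → ℝ≥0∞, LowerSemicontinuous h → P h ≤ F h) ∧
      (∀ h : X → ℝ≥0∞, LowerSemicontinuous h → F h ≤ F₀ h) := by
  obtain ⟨G, hG_cont, hG_smul, hG_add, hG_one, hPG, hGF₀⟩ :=
    statement11_general (e := lscCone.one X) (isPrevision_iff.1 hP).1
      (fun a h => (hPn.map_smul_one_add hP a h).ge) (isPrevision_iff.1 hF₀).2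
      (fun h k => hF₀sub h k h.2 k.2) (hF₀sn.map_one_le hF₀) (fun h => hle h h.2)
  obtain ⟨F, rfl⟩ := exists_comp_coe_lscCone_eq G
  exact ⟨F, isPrevision_iff.2 ⟨hG_cont, hG_smul⟩, fun h k hh hk => hG_add ⟨h, hh⟩ ⟨k, hk⟩,
    fun h hh => hG_one ⟨h, hh⟩, fun h hh => hPG ⟨h, hh⟩, fun h hh => hGF₀ ⟨h, hh⟩⟩
end

section
/- Let X be a topological space and (Q_i)_{i∈I} any family of compact saturated subsets of X. Then the set {C ⊆ X : C closed and C ∩ Q_i ≠ ∅ for every i ∈ I} is compact and upward-closed with respect to inclusion in the space of all closed subsets of X equipped with the lower Vietoris topology. -/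
open TopologicalSpace

/-- A subset is saturated iff it is upward-closed for the specialization preordering
(`x ≤ y` iff every open set containing `x` contains `y`). -/
def Saturated {X : Type*} [TopologicalSpace X] (Q : Set X) : Prop :=
  ∀ x ∈ Q, ∀ y : X, (∀ U : Set X, IsOpen U → x ∈ U → y ∈ U) → y ∈ Q

/-- The lower Vietoris topology on the space of closed subsets of `X`, generated by the
subbasic open sets `◇U = {C closed | C ∩ U ≠ ∅}` for `U` open. -/
def lowerVietoris (X : Type*) [TopologicalSpace X] : TopologicalSpace (Closeds X) :=
  TopologicalSpace.generateFrom
    {S | ∃ U : Set X, IsOpen U ∧ S = {C : Closeds X | ((C : Set X) ∩ U).Nonempty}}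

/-!
By Alexander's subbasis theorem it suffices to refine covers by sets `◇U` with `U ∈ 𝒰`. The
complement of `⋃₀ 𝒰` is a closed set lying in no such `◇U`, so it cannot meet every `Q i`: some
`Q i` is contained in `⋃₀ 𝒰`. By compactness finitely many members of `𝒰` cover that `Q i`, and
then every closed set meeting `Q i` meets one of them.
-/

section

open Set

variable {X : Type*} [TopologicalSpace X]

/-- The set `◇A` of closed subsets of `X` meeting `A`. The set `A` is arbitrary, so that this covers
both the subbasic open sets of the lower Vietoris topology and the sets of the theorem. -/
def closedsMeeting (A : Set X) : Set (Closeds X) :=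
  {C | ((C : Set X) ∩ A).Nonempty}

theorem mem_closedsMeeting {A : Set X} {C : Closeds X} :
    C ∈ closedsMeeting A ↔ ((C : Set X) ∩ A).Nonempty :=
  Iff.rfl

theorem closedsMeeting_mono {A B : Set X} (hAB : A ⊆ B) : closedsMeeting A ⊆ closedsMeeting B :=
  fun _ hC ↦ hC.mono (inter_subset_inter_right _ hAB)

theorem closedsMeeting_sUnion (𝒰 : Set (Set X)) :
    closedsMeeting (⋃₀ 𝒰) = ⋃₀ (closedsMeeting '' 𝒰) := by
  ext C
  simp only [mem_closedsMeeting, sUnion_eq_biUnion, inter_iUnion₂, nonempty_biUnion,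
    biUnion_image, mem_iUnion₂, exists_prop]

theorem isUpperSet_closedsMeeting (A : Set X) : IsUpperSet (closedsMeeting A) :=
  fun _ _ hCC' hC ↦ hC.mono (inter_subset_inter_left _ hCC')

theorem lowerVietoris_eq_generateFrom_image_closedsMeeting :
    lowerVietoris X = generateFrom (closedsMeeting '' {U | IsOpen U}) := by
  refine congrArg generateFrom (Set.ext fun S ↦ ?_)
  exact exists_congr fun U ↦ and_congr_right fun _ ↦ eq_comm

theorem exists_subset_sUnion_of_iInter_closedsMeeting_subset {ι : Sort*} {Q : ι → Set X}
    {𝒰 : Set (Set X)} (hopen : ∀ U ∈ 𝒰, IsOpen U)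
    (hcover : ⋂ i, closedsMeeting (Q i) ⊆ closedsMeeting (⋃₀ 𝒰)) : ∃ i, Q i ⊆ ⋃₀ 𝒰 := by
  by_contra! hQ
  let C : Closeds X := ⟨(⋃₀ 𝒰)ᶜ, (isOpen_sUnion hopen).isClosed_compl⟩
  have hC_meets : C ∈ ⋂ i, closedsMeeting (Q i) := mem_iInter.2 fun i ↦
    let ⟨x, hxQ, hx⟩ := not_subset.1 (hQ i)
    ⟨x, hx, hxQ⟩
  obtain ⟨x, hx, hx'⟩ := hcover hC_meets
  exact hx hx'

theorem isCompact_iInter_closedsMeeting {ι : Sort*} {Q : ι → Set X}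
    (hQ : ∀ i, IsCompact (Q i)) :
    @IsCompact (Closeds X) (lowerVietoris X) (⋂ i, closedsMeeting (Q i)) := by
  let := lowerVietoris X
  refine isCompact_generateFrom lowerVietoris_eq_generateFrom_image_closedsMeeting
    fun P hP hcover ↦ ?_
  obtain ⟨𝒰, hopen, rfl⟩ := subset_image_iff.1 hP
  rw [← closedsMeeting_sUnion] at hcover
  obtain ⟨i, hi⟩ := exists_subset_sUnion_of_iInter_closedsMeeting_subset hopen hcover
  rw [sUnion_eq_biUnion] at hi
  obtain ⟨𝒱, h𝒱𝒰, h𝒱fin, hi𝒱⟩ := (hQ i).elim_finite_subcover_image hopen hi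
  rw [← sUnion_eq_biUnion] at hi𝒱
  refine ⟨closedsMeeting '' 𝒱, image_mono h𝒱𝒰, h𝒱fin.image _, ?_⟩
  calc ⋂ i, closedsMeeting (Q i) ⊆ closedsMeeting (Q i) := iInter_subset _ i
    _ ⊆ closedsMeeting (⋃₀ 𝒱) := closedsMeeting_mono hi𝒱
    _ = ⋃₀ (closedsMeeting '' 𝒱) := closedsMeeting_sUnion 𝒱

end

theorem statement12_general {X : Type*} [TopologicalSpace X] {ι : Type*} (Q : ι → Set X)
    (hc : ∀ i, IsCompact (Q i)) :
    @IsCompact (Closeds X) (lowerVietoris X)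
      {C : Closeds X | ∀ i, ((C : Set X) ∩ Q i).Nonempty} ∧
    (∀ C C' : Closeds X, (∀ i, ((C : Set X) ∩ Q i).Nonempty) → C ≤ C' →
      ∀ i, ((C' : Set X) ∩ Q i).Nonempty) := by
  refine ⟨?_, fun C C' hC hCC' i ↦ isUpperSet_closedsMeeting (Q i) hCC' (hC i)⟩
  simpa only [closedsMeeting, ← Set.ofPred_forall] using isCompact_iInter_closedsMeeting hc

/-- for any family `(Q i)` of compact saturated subsets of `X`, the set of
closed sets meeting every `Q i` is compact and upward-closed (for inclusion) in the space
of closed subsets of `X` with the lower Vietoris topology. -/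
theorem statement12 {X : Type*} [TopologicalSpace X] {ι : Type*} (Q : ι → Set X)
    (hc : ∀ i, IsCompact (Q i)) (hs : ∀ i, Saturated (Q i)) :
    @IsCompact (Closeds X) (lowerVietoris X)
      {C : Closeds X | ∀ i, ((C : Set X) ∩ Q i).Nonempty} ∧
    (∀ C C' : Closeds X, (∀ i, ((C : Set X) ∩ Q i).Nonempty) → C ≤ C' →
      ∀ i, ((C' : Set X) ∩ Q i).Nonempty) :=
  statement12_general Q hc
end

section
/- Let X be a topological space. (a) For every set B of closed subsets of X, the set {Q ⊆ X : Q compact saturated and Q ∩ C ≠ ∅ for every C ∈ B} is closed in the space of compact saturated subsets of X with the upper Vietoris topology. (b) For every set A of compact saturated subsets of X, the set {C ⊆ X : C closed and C ∩ Q ≠ ∅ for every Q ∈ A} is compact and upward-closed with respect to inclusion in the space of closed subsets of X with the lower Vietoris topology. -/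
open TopologicalSpace

/-- The space of compact saturated subsets of `X`. -/
def KSat (X : Type*) [TopologicalSpace X] : Type _ :=
  {Q : Set X // IsCompact Q ∧ Saturated Q}

/-- The upper Vietoris topology on the space of compact saturated subsets of `X`,
generated by the basic open sets `☐U = {Q compact saturated | Q ⊆ U}` for `U` open. -/
def upperVietoris (X : Type*) [TopologicalSpace X] : TopologicalSpace (KSat X) :=
  TopologicalSpace.generateFrom
    {S | ∃ U : Set X, IsOpen U ∧ S = {Q : KSat X | Q.1 ⊆ U}}

/-!
For (a), `Q` meets a closed set `C` exactly when `Q ∉ ☐Cᶜ`. For (b), Alexander's subbase lemma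
reduces compactness to covers by sets `◇U`. Since `◇` commutes with unions, such a cover lies in a
single `◇W` with `W` open; testing it on the closed set `Wᶜ` shows that some `Q ∈ A` is contained in
`W`, and a finite subcover of `Q` then yields a finite subcover of the family.
-/

section Hyperspaces

open scoped Topology

variable {X : Type*} [TopologicalSpace X]

/-- The closed sets meeting `S`. For open `S` this is the subbasic open set `◇S` of the lower
Vietoris topology; `S` is arbitrary so that it can also be a compact set. -/
def diamond (S : Set X) : Set (Closeds X) :=
  {C | ((C : Set X) ∩ S).Nonempty}

/-- The basic open set `☐U` of the upper Vietoris topology: the compact saturated sets contained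
in `U`. -/
def box (U : Set X) : Set (KSat X) :=
  {Q | Q.1 ⊆ U}

theorem isOpen_box {U : Set X} (hU : IsOpen U) : IsOpen[upperVietoris X] (box U) :=
  isOpen_generateFrom_of_mem ⟨U, hU, rfl⟩

theorem compl_box_compl (C : Set X) : (box Cᶜ)ᶜ = {Q : KSat X | (Q.1 ∩ C).Nonempty} := by
  ext Q
  have not_subset_compl_iff : ¬ Q.1 ⊆ Cᶜ ↔ (Q.1 ∩ C).Nonempty := by
    rw [← Set.inter_compl_nonempty_iff, compl_compl]
  exact not_subset_compl_iff

theorem isClosed_setOf_forall_inter_nonempty {B : Set (Set X)} (hB : ∀ C ∈ B, IsClosed C) :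
    IsClosed[upperVietoris X] {Q : KSat X | ∀ C ∈ B, (Q.1 ∩ C).Nonempty} := by
  let _ := upperVietoris X
  simp only [Set.ofPred_forall, ← compl_box_compl]
  exact isClosed_biInter fun C hC ↦ (isOpen_box (hB C hC).isOpen_compl).isClosed_compl

theorem diamond_mono {S T : Set X} (h : S ⊆ T) : diamond S ⊆ diamond T :=
  fun _ hC ↦ hC.mono (Set.inter_subset_inter_right _ h)

theorem isUpperSet_diamond (S : Set X) : IsUpperSet (diamond S) :=
  fun _ _ hle hC ↦ hC.mono (Set.inter_subset_inter_left S hle)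

theorem diamond_sUnion (V : Set (Set X)) : diamond (⋃₀ V) = ⋃₀ (diamond '' V) := by
  ext C
  simp only [diamond, Set.mem_ofPred_eq, Set.sUnion_eq_biUnion (s := V), Set.inter_iUnion₂,
    Set.nonempty_biUnion, Set.sUnion_image, Set.mem_iUnion₂, exists_prop]

theorem biInter_diamond_subset_diamond_iff {A : Set (Set X)} {U : Set X} (hU : IsOpen U) :
    (⋂ Q ∈ A, diamond Q) ⊆ diamond U ↔ ∃ Q ∈ A, Q ⊆ U := by
  refine ⟨fun hAU ↦ ?_, fun ⟨Q, hQ, hQU⟩ ↦ (Set.biInter_subset_of_mem hQ).trans (diamond_mono hQU)⟩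
  by_contra! hA
  let complU : Closeds X := ⟨Uᶜ, hU.isClosed_compl⟩
  have complU_mem : complU ∈ ⋂ Q ∈ A, diamond Q := Set.mem_iInter₂.2 fun Q hQ ↦ by
    obtain ⟨x, hxQ, hxU⟩ := Set.not_subset.1 (hA Q hQ)
    exact ⟨x, hxU, hxQ⟩
  obtain ⟨x, hxU, hxU'⟩ := hAU complU_mem
  exact hxU hxU'

theorem lowerVietoris_eq_generateFrom_image_diamond :
    lowerVietoris X = generateFrom (diamond '' {U : Set X | IsOpen U}) := by
  simp only [lowerVietoris, Set.image, diamond, Set.mem_ofPred_eq, eq_comm]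

theorem isCompact_biInter_diamond {A : Set (Set X)} (hA : ∀ Q ∈ A, IsCompact Q) :
    @IsCompact (Closeds X) (lowerVietoris X) (⋂ Q ∈ A, diamond Q) := by
  let _ := lowerVietoris X
  refine isCompact_generateFrom lowerVietoris_eq_generateFrom_image_diamond fun P hP hcover ↦ ?_
  obtain ⟨V, hV, rfl⟩ := Set.subset_image_iff.1 hP
  rw [← diamond_sUnion, biInter_diamond_subset_diamond_iff (isOpen_sUnion hV)] at hcover
  obtain ⟨Q, hQ, hQV⟩ := hcover
  obtain ⟨T, hTV, hT, hQT⟩ := (hA Q hQ).elim_finite_subcover_image (c := id) hV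
    (hQV.trans_eq Set.sUnion_eq_biUnion)
  refine ⟨diamond '' T, Set.image_mono hTV, hT.image diamond, ?_⟩
  rw [← diamond_sUnion, biInter_diamond_subset_diamond_iff (isOpen_sUnion fun U hU ↦ hV (hTV hU))]
  exact ⟨Q, hQ, hQT.trans_eq Set.sUnion_eq_biUnion.symm⟩

end Hyperspaces

theorem statement13_general {X : Type*} [TopologicalSpace X] :
    (∀ B : Set (Set X), (∀ C ∈ B, IsClosed C) →
      @IsClosed (KSat X) (upperVietoris X) {Q : KSat X | ∀ C ∈ B, (Q.1 ∩ C).Nonempty}) ∧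
    (∀ A : Set (Set X), (∀ Q ∈ A, IsCompact Q) →
      @IsCompact (Closeds X) (lowerVietoris X)
        {C : Closeds X | ∀ Q ∈ A, ((C : Set X) ∩ Q).Nonempty} ∧
      ∀ C C' : Closeds X, (∀ Q ∈ A, ((C : Set X) ∩ Q).Nonempty) → C ≤ C' →
        ∀ Q ∈ A, ((C' : Set X) ∩ Q).Nonempty) := by
  refine ⟨fun B hB ↦ isClosed_setOf_forall_inter_nonempty hB, fun A hA ↦ ⟨?_, ?_⟩⟩
  · simp only [Set.ofPred_forall]
    exact isCompact_biInter_diamond hA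
  · exact fun C C' hC hle Q hQ ↦ isUpperSet_diamond Q hle (hC Q hQ)

/-- (a) for every set `B` of closed subsets of `X`, the compact saturated
sets meeting every member of `B` form a closed subset of the upper Vietoris space;
(b) for every set `A` of compact saturated subsets of `X`, the closed sets meeting every
member of `A` form a compact, inclusion-upward-closed subset of the lower Vietoris
space. -/
theorem statement13 {X : Type*} [TopologicalSpace X] :
    (∀ B : Set (Set X), (∀ C ∈ B, IsClosed C) →
      @IsClosed (KSat X) (upperVietoris X) {Q : KSat X | ∀ C ∈ B, (Q.1 ∩ C).Nonempty}) ∧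
    (∀ A : Set (Set X), (∀ Q ∈ A, IsCompact Q ∧ Saturated Q) →
      @IsCompact (Closeds X) (lowerVietoris X)
        {C : Closeds X | ∀ Q ∈ A, ((C : Set X) ∩ Q).Nonempty} ∧
      ∀ C C' : Closeds X, (∀ Q ∈ A, ((C : Set X) ∩ Q).Nonempty) → C ≤ C' →
        ∀ Q ∈ A, ((C' : Set X) ∩ Q).Nonempty) :=
  ⟨statement13_general.1, fun A hA ↦ statement13_general.2 A fun Q hQ ↦ (hA Q hQ).1⟩
end

section
/- Let X be a topological space, F⁻ a superlinear prevision on X, and F⁺ a sublinear prevision on X. There exists a linear prevision Λ on X with F⁻ ≤ Λ ≤ F⁺ pointwise if and only if F⁻ ≤ F⁺ pointwise. Moreover, when F⁻ ≤ F⁺: if F⁺ is subnormalized then Λ can be chosen subnormalized, and if F⁻ and F⁺ are both normalized then Λ can be chosen normalized. -/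
open scoped ENNReal NNReal

/-!
A convex cone `K` of pairs `(x, r)` is viewed as a set of constraints `Λ x ≤ r`. Among the cones
containing the epigraph of `F⁺` all of whose constraints are compatible with `F⁻ ≤ Λ`, Zorn's lemma
gives a maximal one, the epigraph of some sublinear `Λ`. Maximality then forces two things, each by
exhibiting a larger cone of compatible constraints.

* `Λ` is additive: adjoin the constraints that follow from a lower bound `s ≤ Λ x`, first for
  `s = F⁻ x`, which gives `F⁻ x + Λ z ≤ Λ (x + z)`, and then, using this inequality, for `s = Λ x`.
* `Λ` is Scott-continuous: adjoin the constraints that follow from bounds on directed families.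
  They remain compatible because `F⁻` is itself Scott-continuous.
-/

namespace Prevision

section OrderedCone

variable {C : Type*} [AddCommMonoid C] [Module ℝ≥0 C]

/-- A superlinear functional on a cone, with homogeneity required only as an inequality. -/
structure IsSuperlinear (q : C → ℝ≥0∞) : Prop where
  smul_le_map_smul : ∀ (a : ℝ≥0) (x : C), a • q x ≤ q (a • x)
  add_le_map_add : ∀ x y : C, q x + q y ≤ q (x + y)

/-- The lower envelope of a cone of constraints: the best bound it imposes at each point. -/
noncomputable def envelope (K : Submodule ℝ≥0 (C × ℝ≥0∞)) (x : C) : ℝ≥0∞ :=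
  ⨅ r : {r : ℝ≥0∞ // (x, r) ∈ K}, (r : ℝ≥0∞)

theorem envelope_le_of_mem {K : Submodule ℝ≥0 (C × ℝ≥0∞)} {x : C} {r : ℝ≥0∞}
    (h : (x, r) ∈ K) : envelope K x ≤ r :=
  iInf_le (fun r : {r : ℝ≥0∞ // (x, r) ∈ K} => (r : ℝ≥0∞)) ⟨r, h⟩

variable [Preorder C] {p q : C → ℝ≥0∞}

/-- A monotone sublinear functional on an ordered cone. Homogeneity is only required as an
inequality; equality follows by rescaling, see `IsSublinear.map_smul`. -/
structure IsSublinear (p : C → ℝ≥0∞) : Prop where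
  monotone : Monotone p
  map_smul_le : ∀ (a : ℝ≥0) (x : C), p (a • x) ≤ a • p x
  map_add_le : ∀ x y : C, p (x + y) ≤ p x + p y

/-- A pair `(x, r)` in the cone `K` is read as the constraint `Λ x ≤ r` on an unknown monotone
functional `Λ`; the cone is required to be saturated under monotonicity, and each of its
constraints to be compatible with `q ≤ Λ`. -/
structure IsConstraintCone (q : C → ℝ≥0∞) (K : Submodule ℝ≥0 (C × ℝ≥0∞)) : Prop where
  mem_of_le : ∀ ⦃x y : C⦄ ⦃r : ℝ≥0∞⦄, x ≤ y → (y, r) ∈ K → (x, r) ∈ K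
  le_of_mem : ∀ ⦃x : C⦄ ⦃r : ℝ≥0∞⦄, (x, r) ∈ K → q x ≤ r

namespace IsSublinear

theorem map_smul (hp : IsSublinear p) (a : ℝ≥0) (x : C) : p (a • x) = a • p x := by
  rcases eq_or_ne a 0 with rfl | ha
  · simpa using hp.map_smul_le 0 x
  refine (hp.map_smul_le a x).antisymm ?_
  calc a • p x = a • p (a⁻¹ • a • x) := by rw [inv_smul_smul₀ ha]
    _ ≤ a • a⁻¹ • p (a • x) := by gcongr; exact hp.map_smul_le _ _
    _ = p (a • x) := smul_inv_smul₀ ha _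

/-- The epigraph of a sublinear functional, as a convex cone. -/
def epigraph (hp : IsSublinear p) : Submodule ℝ≥0 (C × ℝ≥0∞) where
  carrier := {u | p u.1 ≤ u.2}
  zero_mem' := by simpa using hp.map_smul_le 0 0
  add_mem' hu hv := (hp.map_add_le _ _).trans (add_le_add hu hv)
  smul_mem' a _ hu := (hp.map_smul_le a _).trans (smul_le_smul_of_nonneg_left hu zero_le)

theorem isConstraintCone_epigraph (hp : IsSublinear p) (hqp : q ≤ p) :
    IsConstraintCone q hp.epigraph where
  mem_of_le _ _ _ hxy hy := (hp.monotone hxy).trans hy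
  le_of_mem x _ hx := (hqp x).trans hx

end IsSublinear

namespace IsConstraintCone

variable {K : Submodule ℝ≥0 (C × ℝ≥0∞)}

theorem le_envelope (hK : IsConstraintCone q K) : q ≤ envelope K :=
  fun _ => le_iInf fun r => hK.le_of_mem r.2

theorem isSublinear_envelope (hK : IsConstraintCone q K) : IsSublinear (envelope K) where
  monotone _ _ hxy := le_iInf fun r => envelope_le_of_mem (hK.mem_of_le hxy r.2)
  map_smul_le a x := by
    rcases eq_or_ne a 0 with rfl | ha
    · simpa using envelope_le_of_mem K.zero_mem
    rw [ENNReal.smul_def, smul_eq_mul, envelope.eq_def K x,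
      ENNReal.mul_iInf_of_ne (by simpa using ha) ENNReal.coe_ne_top]
    exact le_iInf fun r => envelope_le_of_mem (K.smul_mem a r.2)
  map_add_le _ _ := ENNReal.le_iInf_add_iInf fun r s => envelope_le_of_mem (K.add_mem r.2 s.2)

theorem sSup_of_isChain {c : Set (Submodule ℝ≥0 (C × ℝ≥0∞))} (hc : IsChain (· ≤ ·) c)
    (hne : c.Nonempty) (h : ∀ K ∈ c, IsConstraintCone q K) : IsConstraintCone q (sSup c) where
  mem_of_le x y r hxy hy := by
    rw [Submodule.mem_sSup_of_directed hne hc.directedOn] at hy ⊢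
    obtain ⟨K, hKc, hyK⟩ := hy
    exact ⟨K, hKc, (h K hKc).mem_of_le hxy hyK⟩
  le_of_mem x r hx := by
    rw [Submodule.mem_sSup_of_directed hne hc.directedOn] at hx
    obtain ⟨K, hKc, hxK⟩ := hx
    exact (h K hKc).le_of_mem hxK

end IsConstraintCone

theorem IsSublinear.exists_le_maximal_epigraph {p₀ : C → ℝ≥0∞} (hp₀ : IsSublinear p₀)
    (hq : q ≤ p₀) :
    ∃ p, ∃ hp : IsSublinear p, p ≤ p₀ ∧ Maximal (IsConstraintCone q) hp.epigraph := by
  obtain ⟨K, hle, hK⟩ := zorn_le_nonempty₀ {K | IsConstraintCone q K}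
    (fun c hc hchain K hKc => ⟨sSup c, .sSup_of_isChain hchain ⟨K, hKc⟩ hc, fun _ => le_sSup⟩)
    hp₀.epigraph (hp₀.isConstraintCone_epigraph hq)
  have hsub : IsSublinear (envelope K) := hK.prop.isSublinear_envelope
  have hK_le : K ≤ hsub.epigraph := fun _ hu => envelope_le_of_mem hu
  have hcone : IsConstraintCone q hsub.epigraph :=
    hsub.isConstraintCone_epigraph hK.prop.le_envelope
  exact ⟨envelope K, hsub, fun x => envelope_le_of_mem (hle (le_refl (p₀ x))), hcone,
    fun K' hK' hle' => (hK.le_of_ge hK' (hK_le.trans hle')).trans hK_le⟩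

section Additivity

variable [IsOrderedAddMonoid C]

/-- The cone of the constraints `Λ z ≤ r` that become available once `s ≤ Λ x` is imposed on
additive functionals `Λ ≤ p`: those with `p (l • x + z) ≤ l • s + r` for some `l`. -/
def IsSublinear.coneOfLowerBound (hp : IsSublinear p) (x : C) (s : ℝ≥0) :
    Submodule ℝ≥0 (C × ℝ≥0∞) where
  carrier := {u | ∃ l : ℝ≥0, p (l • x + u.1) ≤ l • (s : ℝ≥0∞) + u.2}
  zero_mem' := ⟨0, by simpa using hp.map_smul_le 0 0⟩
  add_mem' := by
    rintro u v ⟨l, hl⟩ ⟨m, hm⟩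
    refine ⟨l + m, ?_⟩
    calc p ((l + m) • x + (u.1 + v.1)) = p ((l • x + u.1) + (m • x + v.1)) := by
          rw [add_smul, add_add_add_comm]
      _ ≤ (l • (s : ℝ≥0∞) + u.2) + (m • (s : ℝ≥0∞) + v.2) :=
          (hp.map_add_le _ _).trans (add_le_add hl hm)
      _ = (l + m) • (s : ℝ≥0∞) + (u.2 + v.2) := by rw [add_smul, add_add_add_comm]
  smul_mem' := by
    rintro a u ⟨l, hl⟩
    refine ⟨a * l, ?_⟩
    calc p ((a * l) • x + a • u.1) = p (a • (l • x + u.1)) := by rw [smul_add, mul_smul]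
      _ ≤ a • (l • (s : ℝ≥0∞) + u.2) := (hp.map_smul_le _ _).trans (by gcongr)
      _ = (a * l) • (s : ℝ≥0∞) + a • u.2 := by rw [smul_add, mul_smul]

theorem IsSublinear.isConstraintCone_coneOfLowerBound (hp : IsSublinear p) {x : C} {s : ℝ≥0}
    (h : ∀ (l : ℝ≥0) (z : C), l • (s : ℝ≥0∞) + q z ≤ p (l • x + z)) :
    IsConstraintCone q (hp.coneOfLowerBound x s) where
  mem_of_le := by
    rintro z z' r hz ⟨l, hl⟩
    exact ⟨l, (hp.monotone (add_le_add_right hz _)).trans hl⟩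
  le_of_mem := by
    rintro z r ⟨l, hl⟩
    have hls : l • (s : ℝ≥0∞) ≠ ∞ := ENNReal.mul_ne_top ENNReal.coe_ne_top ENNReal.coe_ne_top
    exact (ENNReal.add_le_add_iff_left hls).mp ((h l z).trans hl)

variable {hp : IsSublinear p}

theorem add_le_of_maximal_epigraph (hmax : Maximal (IsConstraintCone q) hp.epigraph)
    {x : C} {s : ℝ≥0∞} (h : ∀ (l : ℝ≥0) (z : C), l • s + q z ≤ p (l • x + z)) (z : C) :
    s + p z ≤ p (x + z) := by
  have hs : s ≤ p (x + z) := by simpa using le_self_add.trans (h 1 z)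
  cases s with
  | top => simpa using hs
  | coe s =>
    have hle : hp.coneOfLowerBound x s ≤ hp.epigraph :=
      hmax.le_of_ge (hp.isConstraintCone_coneOfLowerBound h)
        fun u (hu : p u.1 ≤ u.2) => ⟨0, by simpa using hu⟩
    have hmem : (z, p (x + z) - s) ∈ hp.coneOfLowerBound x s :=
      ⟨1, by simp [add_tsub_cancel_of_le hs]⟩
    calc s + p z ≤ s + (p (x + z) - s) := by gcongr; exact hle hmem
      _ = p (x + z) := add_tsub_cancel_of_le hs

theorem superlinear_add_le_of_maximal_epigraph (hq : IsSuperlinear q)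
    (hmax : Maximal (IsConstraintCone q) hp.epigraph) (x z : C) : q x + p z ≤ p (x + z) :=
  add_le_of_maximal_epigraph hmax (fun l z => calc
    l • q x + q z ≤ q (l • x) + q z := by gcongr; exact hq.smul_le_map_smul l x
    _ ≤ q (l • x + z) := hq.add_le_map_add _ _
    _ ≤ p (l • x + z) := hmax.prop.le_of_mem (le_refl (p _))) z

theorem map_add_of_maximal_epigraph (hq : IsSuperlinear q)
    (hmax : Maximal (IsConstraintCone q) hp.epigraph) (x z : C) : p (x + z) = p x + p z :=
  (hp.map_add_le x z).antisymm <| add_le_of_maximal_epigraph hmax (fun l z => calc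
    l • p x + q z = q z + p (l • x) := by rw [hp.map_smul, add_comm]
    _ ≤ p (z + l • x) := superlinear_add_le_of_maximal_epigraph hq hmax _ _
    _ = p (l • x + z) := by rw [add_comm]) z

end Additivity

section ScottContinuity

/-- The cone of the constraints `Λ x ≤ r` forced on Scott-continuous functionals `Λ ≤ p`: those
for which `x` lies below the supremum of a directed family on which `p` is bounded by `r`. -/
def IsSublinear.coneOfDirected (hp : IsSublinear p)
    (hadd : ScottContinuous fun u : C × C => u.1 + u.2)
    (hsmul : ∀ a : ℝ≥0, ScottContinuous fun x : C => a • x) :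
    Submodule ℝ≥0 (C × ℝ≥0∞) where
  carrier := {u | ∃ D : Set C, D.Nonempty ∧ DirectedOn (· ≤ ·) D ∧
    (∀ d ∈ D, p d ≤ u.2) ∧ ∃ b, IsLUB D b ∧ u.1 ≤ b}
  zero_mem' := ⟨{0}, Set.singleton_nonempty 0, directedOn_singleton 0,
    by simpa using hp.map_smul_le 0 0, 0, isLUB_singleton, le_rfl⟩
  add_mem' := by
    rintro u v ⟨D, hne, hdir, hpD, b, hb, hub⟩ ⟨E, hne', hdir', hpE, b', hb', hvb⟩
    have hprod : DirectedOn (· ≤ ·) (D ×ˢ E) := hdir.prod hdir'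
    refine ⟨(fun w : C × C => w.1 + w.2) '' (D ×ˢ E), (hne.prod hne').image _,
      hprod.mono_comp hadd.monotone, ?_, b + b',
      hadd (hne.prod hne') hprod (hb.prod hne hne' hb'),
      hadd.monotone (Prod.mk_le_mk.mpr ⟨hub, hvb⟩)⟩
    rintro _ ⟨⟨d, e⟩, ⟨hd, he⟩, rfl⟩
    exact (hp.map_add_le d e).trans (add_le_add (hpD d hd) (hpE e he))
  smul_mem' := by
    rintro a u ⟨D, hne, hdir, hpD, b, hb, hub⟩
    refine ⟨(a • ·) '' D, hne.image _, hdir.mono_comp (hsmul a).monotone, ?_, a • b,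
      hsmul a hne hdir hb, (hsmul a).monotone hub⟩
    rintro _ ⟨d, hd, rfl⟩
    exact (hp.map_smul_le a d).trans (smul_le_smul_of_nonneg_left (hpD d hd) zero_le)

theorem IsSublinear.isConstraintCone_coneOfDirected (hp : IsSublinear p)
    (hadd : ScottContinuous fun u : C × C => u.1 + u.2)
    (hsmul : ∀ a : ℝ≥0, ScottContinuous fun x : C => a • x)
    (hq : ScottContinuous q) (hqp : q ≤ p) :
    IsConstraintCone q (hp.coneOfDirected hadd hsmul) where
  mem_of_le := by
    rintro x y r hxy ⟨D, hne, hdir, hpD, b, hb, hyb⟩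
    exact ⟨D, hne, hdir, hpD, b, hb, hxy.trans hyb⟩
  le_of_mem := by
    rintro x r ⟨D, hne, hdir, hpD, b, hb, hxb⟩
    refine (hq.monotone hxb).trans ((hq hne hdir hb).2 ?_)
    rintro _ ⟨d, hd, rfl⟩
    exact (hqp d).trans (hpD d hd)

theorem scottContinuous_of_maximal_epigraph {hp : IsSublinear p}
    (hadd : ScottContinuous fun u : C × C => u.1 + u.2)
    (hsmul : ∀ a : ℝ≥0, ScottContinuous fun x : C => a • x) (hq : ScottContinuous q)
    (hmax : Maximal (IsConstraintCone q) hp.epigraph) : ScottContinuous p := by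
  have hqp : q ≤ p := fun x => hmax.prop.le_of_mem (le_refl (p x))
  have hle : hp.coneOfDirected hadd hsmul ≤ hp.epigraph :=
    hmax.le_of_ge (hp.isConstraintCone_coneOfDirected hadd hsmul hq hqp)
      fun u (hu : p u.1 ≤ u.2) => ⟨{u.1}, Set.singleton_nonempty _, directedOn_singleton _,
        by simpa using hu, u.1, isLUB_singleton, le_rfl⟩
  intro D hne hdir b hb
  refine ⟨hp.monotone.mem_upperBounds_image hb.1, fun r hr => ?_⟩
  have hmem : (b, r) ∈ hp.coneOfDirected hadd hsmul :=
    ⟨D, hne, hdir, fun d hd => hr ⟨d, hd, rfl⟩, b, hb, le_rfl⟩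
  exact hle hmem

end ScottContinuity

theorem exists_scottContinuous_linearMap_between
    (hadd : ScottContinuous fun u : C × C => u.1 + u.2)
    (hsmul : ∀ a : ℝ≥0, ScottContinuous fun x : C => a • x)
    (hq : IsSuperlinear q) (hqc : ScottContinuous q) (hp : IsSublinear p) (hqp : q ≤ p) :
    ∃ Λ : C →ₗ[ℝ≥0] ℝ≥0∞, ScottContinuous Λ ∧ q ≤ Λ ∧ Λ ≤ p := by
  have : IsOrderedAddMonoid C :=
    { add_le_add_left := fun _ _ hxy z => hadd.monotone (Prod.mk_le_mk.mpr ⟨hxy, le_refl z⟩) }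
  obtain ⟨Λ, hΛ, hΛp, hmax⟩ := hp.exists_le_maximal_epigraph hqp
  exact ⟨⟨⟨Λ, map_add_of_maximal_epigraph hq hmax⟩, hΛ.map_smul⟩,
    scottContinuous_of_maximal_epigraph hadd hsmul hqc hmax,
    fun x => hmax.prop.le_of_mem (le_refl (Λ x)), hΛp⟩

end OrderedCone

theorem scottContinuous_of_monotone_of_continuous {α β : Type*} [LinearOrder α]
    [TopologicalSpace α] [OrderTopology α] [Preorder β] [TopologicalSpace β]
    [OrderClosedTopology β] {f : α → β} (hmono : Monotone f) (hf : Continuous f) :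
    ScottContinuous f :=
  fun _ hne _ _ ha => ha.isLUB_of_tendsto (hmono.monotoneOn _) hne hf.continuousWithinAt

theorem ennreal_scottContinuous_add : ScottContinuous fun u : ℝ≥0∞ × ℝ≥0∞ => u.1 + u.2 :=
  .fromProd
    (fun _ => scottContinuous_of_monotone_of_continuous
      (fun _ _ h => add_le_add_right h _) (continuous_const_add _))
    (fun _ => scottContinuous_of_monotone_of_continuous
      (fun _ _ h => add_le_add_left h _) (continuous_add_const _))

theorem ennreal_continuous_const_smul (a : ℝ≥0) : Continuous fun r : ℝ≥0∞ => a • r :=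
  ENNReal.continuous_const_mul ENNReal.coe_ne_top

theorem ennreal_scottContinuous_smul (a : ℝ≥0) : ScottContinuous fun r : ℝ≥0∞ => a • r :=
  scottContinuous_of_monotone_of_continuous (monotone_smul_left_of_nonneg zero_le)
    (ennreal_continuous_const_smul a)

section LowerSemicontinuous

variable {X : Type*} [TopologicalSpace X]

variable (X) in
/-- The cone `ℒX` of lower semicontinuous functions from `X` to `[0, ∞]`. -/
def lscCone : Submodule ℝ≥0 (X → ℝ≥0∞) where
  carrier := {f | LowerSemicontinuous f}
  zero_mem' := lowerSemicontinuous_const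
  add_mem' hf hg := LowerSemicontinuous.add hf hg
  smul_mem' a _ hf := (ennreal_continuous_const_smul a).comp_lowerSemicontinuous hf
    (monotone_smul_left_of_nonneg zero_le)

/-- The pointwise supremum of a set of lower semicontinuous functions. -/
noncomputable def lscSup (D : Set (lscCone X)) : lscCone X :=
  ⟨fun x => ⨆ h ∈ (Subtype.val '' D : Set (X → ℝ≥0∞)), h x,
    lowerSemicontinuous_biSup <| by rintro _ ⟨h, -, rfl⟩; exact h.2⟩

theorem isLUB_coe_lscSup (D : Set (lscCone X)) :
    IsLUB (Subtype.val '' D) (lscSup D : X → ℝ≥0∞) :=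
  isLUB_pi.mpr fun _ => isLUB_biSup

theorem isLUB_lscSup (D : Set (lscCone X)) : IsLUB D (lscSup D) :=
  (isLUB_coe_lscSup D).of_image (f := Subtype.val) Iff.rfl

theorem isLUB_coe_image_iff {D : Set (lscCone X)} {f : lscCone X} :
    IsLUB (Subtype.val '' D) (f : X → ℝ≥0∞) ↔ IsLUB D f := by
  refine ⟨IsLUB.of_image (f := Subtype.val) Iff.rfl, fun hf => ?_⟩
  rw [hf.unique (isLUB_lscSup D)]
  exact isLUB_coe_lscSup D

theorem scottContinuous_lscCone_coe : ScottContinuous (Subtype.val : lscCone X → X → ℝ≥0∞) :=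
  fun _ _ _ _ hf => isLUB_coe_image_iff.mpr hf

theorem scottContinuous_lscCone_apply (x : X) :
    ScottContinuous fun f : lscCone X => (f : X → ℝ≥0∞) x :=
  fun D hne hdir f hf => by
    simpa only [Set.image_image] using isLUB_pi.mp (scottContinuous_lscCone_coe hne hdir hf) x

theorem scottContinuous_lscCone_of_apply {α : Type*} [Preorder α] {φ : α → lscCone X}
    (h : ∀ x, ScottContinuous fun a => (φ a : X → ℝ≥0∞) x) : ScottContinuous φ := by
  intro D hne hdir a ha
  refine isLUB_coe_image_iff.mp (isLUB_pi.mpr fun x => ?_)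
  simpa only [Set.image_image] using h x hne hdir ha

theorem lscCone_scottContinuous_add :
    ScottContinuous fun u : lscCone X × lscCone X => u.1 + u.2 :=
  scottContinuous_lscCone_of_apply fun x =>
    ((scottContinuous_lscCone_apply x).prod
      (scottContinuous_lscCone_apply x)).comp ennreal_scottContinuous_add

theorem lscCone_scottContinuous_smul (a : ℝ≥0) :
    ScottContinuous fun f : lscCone X => a • f :=
  scottContinuous_lscCone_of_apply fun x =>
    (scottContinuous_lscCone_apply x).comp (ennreal_scottContinuous_smul a)

theorem isPrevision_iff {F : (X → ℝ≥0∞) → ℝ≥0∞} :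
    IsPrevision F ↔ ScottContinuous (fun h : lscCone X => F h) ∧
      ∀ (a : ℝ≥0) (h : lscCone X), F (a • h : lscCone X) = a • F h := by
  constructor
  · rintro ⟨-, hsup, hsmul⟩
    refine ⟨fun D hne hdir f hf => ?_, fun a h => hsmul a h h.2⟩
    have hF : F (lscSup D) = ⨆ h ∈ Subtype.val '' D, F h :=
      hsup _ (hne.image _) (by rintro _ ⟨h, -, rfl⟩; exact h.2) (directedOn_image.mpr hdir)
    simpa only [hf.unique (isLUB_lscSup D), hF, Set.image_image]
      using isLUB_biSup (s := Subtype.val '' D) (f := F)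
  · rintro ⟨hscott, hsmul⟩
    refine ⟨fun h h' H H' hle => hscott.monotone (a := ⟨h, H⟩) (b := ⟨h', H'⟩) hle,
      fun D hne hlsc hdir => ?_, fun a h H => hsmul a ⟨h, H⟩⟩
    lift D to Set (lscCone X) using hlsc
    have hF : IsLUB ((fun h : lscCone X => F h) '' D) (F (lscSup D)) :=
      hscott (Set.image_nonempty.mp hne) (directedOn_image (f := Subtype.val).mp hdir)
        (isLUB_lscSup D)
    rw [← Set.image_image F] at hF
    exact hF.unique isLUB_biSup

end LowerSemicontinuous

section Sandwich

variable {X : Type*} [TopologicalSpace X] {F Fm Fp : (X → ℝ≥0∞) → ℝ≥0∞}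

theorem exists_pLinear_isPrevision_between (hFm : IsPrevision Fm) (hFmsup : PSuperlinear Fm)
    (hFpmono : ∀ ⦃h h' : X → ℝ≥0∞⦄, LowerSemicontinuous h → LowerSemicontinuous h' →
      h ≤ h' → Fp h ≤ Fp h')
    (hFpsmul : ∀ (a : ℝ≥0) (h : X → ℝ≥0∞), LowerSemicontinuous h →
      Fp (fun x => (a : ℝ≥0∞) * h x) = (a : ℝ≥0∞) * Fp h)
    (hFpsub : PSublinear Fp) (hle : ∀ h : X → ℝ≥0∞, LowerSemicontinuous h → Fm h ≤ Fp h) :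
    ∃ Λ : (X → ℝ≥0∞) → ℝ≥0∞, IsPrevision Λ ∧ PLinear Λ ∧
      (∀ h : X → ℝ≥0∞, LowerSemicontinuous h → Fm h ≤ Λ h) ∧
      (∀ h : X → ℝ≥0∞, LowerSemicontinuous h → Λ h ≤ Fp h) := by
  obtain ⟨hFm_scott, hFm_smul⟩ := isPrevision_iff.mp hFm
  have hq : IsSuperlinear fun h : lscCone X => Fm h :=
    ⟨fun a h => (hFm_smul a h).ge, fun h h' => hFmsup h h' h.2 h'.2⟩
  have hp : IsSublinear fun h : lscCone X => Fp h :=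
    ⟨fun h h' hhh' => hFpmono h.2 h'.2 hhh', fun a h => (hFpsmul a h h.2).le,
      fun h h' => hFpsub h h' h.2 h'.2⟩
  obtain ⟨Λ, hΛ, hFmΛ, hΛFp⟩ := exists_scottContinuous_linearMap_between
    lscCone_scottContinuous_add lscCone_scottContinuous_smul hq hFm_scott hp fun h => hle h h.2
  have hext (h : lscCone X) : Function.extend Subtype.val Λ 0 (h : X → ℝ≥0∞) = Λ h :=
    Subtype.val_injective.extend_apply _ _ _
  refine ⟨Function.extend Subtype.val Λ 0, isPrevision_iff.mpr ⟨?_, fun a h => ?_⟩,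
    fun h h' H H' => ?_, fun h H => ?_, fun h H => ?_⟩
  · simpa only [hext] using hΛ
  · rw [hext, hext, map_smul]
  · lift h to lscCone X using H
    lift h' to lscCone X using H'
    rw [hext, hext, ← map_add]
    exact hext (h + h')
  · lift h to lscCone X using H
    exact (hFmΛ h).trans_eq (hext h).symm
  · lift h to lscCone X using H
    exact (hext h).trans_le (hΛFp h)

theorem map_zero_of_map_smul
    (hsmul : ∀ (a : ℝ≥0) (h : X → ℝ≥0∞), LowerSemicontinuous h →
      F (fun x => (a : ℝ≥0∞) * h x) = (a : ℝ≥0∞) * F h) : F (fun _ => 0) = 0 := by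
  simpa using hsmul 0 (fun _ => 0) lowerSemicontinuous_const

theorem map_one_le_of_pSubnormalized (hF : PSubnormalized F) (hF0 : F (fun _ => 0) = 0) :
    F (fun _ => 1) ≤ 1 := by
  simpa [hF0] using hF (fun _ => 0) lowerSemicontinuous_const

theorem map_one_of_pNormalized (hF : PNormalized F) (hF0 : F (fun _ => 0) = 0) :
    F (fun _ => 1) = 1 := by
  simpa [hF0] using hF (fun _ => 0) lowerSemicontinuous_const

theorem pSubnormalized_of_map_one_le (hF : PLinear F) (hF1 : F (fun _ => 1) ≤ 1) :
    PSubnormalized F := fun h H => by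
  rw [hF _ _ lowerSemicontinuous_const H]
  gcongr

theorem pNormalized_of_map_one (hF : PLinear F) (hF1 : F (fun _ => 1) = 1) :
    PNormalized F := fun h H => by
  rw [hF _ _ lowerSemicontinuous_const H, hF1]

end Sandwich

end Prevision

open Prevision in
theorem statement14_general {X : Type*} [TopologicalSpace X] (Fm Fp : (X → ℝ≥0∞) → ℝ≥0∞)
    (hFm : IsPrevision Fm) (hFmsup : PSuperlinear Fm)
    (hFpmono : ∀ ⦃h h' : X → ℝ≥0∞⦄, LowerSemicontinuous h → LowerSemicontinuous h' →
      h ≤ h' → Fp h ≤ Fp h')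
    (hFpsmul : ∀ (a : ℝ≥0) (h : X → ℝ≥0∞), LowerSemicontinuous h →
      Fp (fun x => (a : ℝ≥0∞) * h x) = (a : ℝ≥0∞) * Fp h)
    (hFpsub : PSublinear Fp) :
    ((∃ Λ : (X → ℝ≥0∞) → ℝ≥0∞, IsPrevision Λ ∧ PLinear Λ ∧
        (∀ h : X → ℝ≥0∞, LowerSemicontinuous h → Fm h ≤ Λ h) ∧
        (∀ h : X → ℝ≥0∞, LowerSemicontinuous h → Λ h ≤ Fp h)) ↔
      (∀ h : X → ℝ≥0∞, LowerSemicontinuous h → Fm h ≤ Fp h)) ∧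
    ((∀ h : X → ℝ≥0∞, LowerSemicontinuous h → Fm h ≤ Fp h) → PSubnormalized Fp →
      ∃ Λ : (X → ℝ≥0∞) → ℝ≥0∞, IsPrevision Λ ∧ PLinear Λ ∧ PSubnormalized Λ ∧
        (∀ h : X → ℝ≥0∞, LowerSemicontinuous h → Fm h ≤ Λ h) ∧
        (∀ h : X → ℝ≥0∞, LowerSemicontinuous h → Λ h ≤ Fp h)) ∧
    ((∀ h : X → ℝ≥0∞, LowerSemicontinuous h → Fm h ≤ Fp h) →
        PNormalized Fm → PNormalized Fp →
      ∃ Λ : (X → ℝ≥0∞) → ℝ≥0∞, IsPrevision Λ ∧ PLinear Λ ∧ PNormalized Λ ∧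
        (∀ h : X → ℝ≥0∞, LowerSemicontinuous h → Fm h ≤ Λ h) ∧
        (∀ h : X → ℝ≥0∞, LowerSemicontinuous h → Λ h ≤ Fp h)) := by
  have exists_between := exists_pLinear_isPrevision_between hFm hFmsup hFpmono hFpsmul hFpsub
  have hFm0 := map_zero_of_map_smul hFm.2.2
  have hFp0 := map_zero_of_map_smul hFpsmul
  have one_lsc : LowerSemicontinuous fun _ : X => (1 : ℝ≥0∞) := lowerSemicontinuous_const
  refine ⟨⟨fun ⟨Λ, _, _, hFmΛ, hΛFp⟩ h H => (hFmΛ h H).trans (hΛFp h H), exists_between⟩, ?_, ?_⟩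
  · intro hle hFp_sub
    obtain ⟨Λ, hΛ, hlin, hFmΛ, hΛFp⟩ := exists_between hle
    have hΛ1 : Λ (fun _ => 1) ≤ 1 :=
      (hΛFp _ one_lsc).trans (map_one_le_of_pSubnormalized hFp_sub hFp0)
    exact ⟨Λ, hΛ, hlin, pSubnormalized_of_map_one_le hlin hΛ1, hFmΛ, hΛFp⟩
  · intro hle hFm_norm hFp_norm
    obtain ⟨Λ, hΛ, hlin, hFmΛ, hΛFp⟩ := exists_between hle
    have hΛ1 : Λ (fun _ => 1) = 1 := le_antisymm
      ((hΛFp _ one_lsc).trans_eq (map_one_of_pNormalized hFp_norm hFp0))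
      ((map_one_of_pNormalized hFm_norm hFm0).symm.trans_le (hFmΛ _ one_lsc))
    exact ⟨Λ, hΛ, hlin, pNormalized_of_map_one hlin hΛ1, hFmΛ, hΛFp⟩

/-- sandwich: for a superlinear prevision `F⁻` and a sublinear prevision
`F⁺`, there is a linear prevision `Λ` with `F⁻ ≤ Λ ≤ F⁺` iff `F⁻ ≤ F⁺` (pointwise on
lower semicontinuous maps); moreover, when `F⁻ ≤ F⁺`, `Λ` can be chosen subnormalized
if `F⁺` is, and normalized if both `F⁻` and `F⁺` are. -/
theorem statement14 {X : Type*} [TopologicalSpace X] (Fm Fp : (X → ℝ≥0∞) → ℝ≥0∞)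
    (hFm : IsPrevision Fm) (hFmsup : PSuperlinear Fm)
    (hFp : IsPrevision Fp) (hFpsub : PSublinear Fp) :
    ((∃ Λ : (X → ℝ≥0∞) → ℝ≥0∞, IsPrevision Λ ∧ PLinear Λ ∧
        (∀ h : X → ℝ≥0∞, LowerSemicontinuous h → Fm h ≤ Λ h) ∧
        (∀ h : X → ℝ≥0∞, LowerSemicontinuous h → Λ h ≤ Fp h)) ↔
      (∀ h : X → ℝ≥0∞, LowerSemicontinuous h → Fm h ≤ Fp h)) ∧
    ((∀ h : X → ℝ≥0∞, LowerSemicontinuous h → Fm h ≤ Fp h) → PSubnormalized Fp →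
      ∃ Λ : (X → ℝ≥0∞) → ℝ≥0∞, IsPrevision Λ ∧ PLinear Λ ∧ PSubnormalized Λ ∧
        (∀ h : X → ℝ≥0∞, LowerSemicontinuous h → Fm h ≤ Λ h) ∧
        (∀ h : X → ℝ≥0∞, LowerSemicontinuous h → Λ h ≤ Fp h)) ∧
    ((∀ h : X → ℝ≥0∞, LowerSemicontinuous h → Fm h ≤ Fp h) →
        PNormalized Fm → PNormalized Fp →
      ∃ Λ : (X → ℝ≥0∞) → ℝ≥0∞, IsPrevision Λ ∧ PLinear Λ ∧ PNormalized Λ ∧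
        (∀ h : X → ℝ≥0∞, LowerSemicontinuous h → Fm h ≤ Λ h) ∧
        (∀ h : X → ℝ≥0∞, LowerSemicontinuous h → Λ h ≤ Fp h)) := by
  exact statement14_general Fm Fp hFm hFmsup hFp.1 hFp.2.2 hFpsub
end

section
/- Let X be a locally compact topological space. For every prevision P on X and every h ∈ ℒX, P(h) = sup{F(h) : F a superlinear prevision on X with F ≤ P pointwise}, i.e. every prevision on a locally compact space is the pointwise supremum of the superlinear previsions below it. -/
open scoped ENNReal NNReal

/-!
For a nonempty compact set `K`, compactness makes `g ↦ ⨅ x ∈ K, g x` a superlinear prevision, and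
superlinear previsions are closed under multiplication by constants and under finite infima. Local
compactness writes `h` as the directed supremum of the step functions `w = max_i c_i • 1_{int K_i}`
with `c_i ≤ h` on `K_i`, so `P h` is the supremum of the values `P w` by Scott continuity. For such
a `w`, the superlinear prevision `F g = P w * min_i ⨅ x ∈ K_i, g x / c_i` has value at least `P w`
at `h`. It lies below `P` because `g` dominates the multiple of `w` by the minimum in its
definition.
-/

section

open TopologicalSpace Set

variable {X ι : Type*} [TopologicalSpace X]

theorem lowerSemicontinuous_finset_sup {γ : Type*} [LinearOrder γ] [OrderBot γ]
    {f : ι → X → γ} (hf : ∀ i, LowerSemicontinuous (f i)) (s : Finset ι) :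
    LowerSemicontinuous (s.sup f) :=
  Finset.sup_induction lowerSemicontinuous_const (fun _ hu _ hv => hu.sup hv) fun i _ => hf i

namespace IsPrevision

variable {F G P : (X → ℝ≥0∞) → ℝ≥0∞}

theorem map_bot (hP : IsPrevision P) : P ⊥ = 0 := by
  have zero_smul_bot := hP.2.2 0 ⊥ lowerSemicontinuous_const
  simpa only [ENNReal.coe_zero, zero_mul] using! zero_smul_bot

theorem map_iSup_of_directed [Nonempty ι] (hP : IsPrevision P) {f : ι → X → ℝ≥0∞}
    (hf : ∀ i, LowerSemicontinuous (f i)) (hdir : Directed (· ≤ ·) f) :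
    P (⨆ i, f i) = ⨆ i, P (f i) := by
  have scott := hP.2.1 (range f) (range_nonempty f) (forall_mem_range.2 hf) hdir.directedOn_range
  rw [iSup_range] at scott
  convert scott using 2
  ext x
  rw [iSup_apply, iSup_range]

theorem map_iSup_eq_iSup_finset_sup (hP : IsPrevision P) {f : ι → X → ℝ≥0∞}
    (hf : ∀ i, LowerSemicontinuous (f i)) :
    P (⨆ i, f i) = ⨆ s : Finset ι, P (s.sup f) := by
  rw [← hP.map_iSup_of_directed (lowerSemicontinuous_finset_sup hf)
      (directed_of_isDirected_le fun _ _ => Finset.sup_mono), iSup_eq_iSup_finset]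
  simp only [Finset.sup_eq_iSup]

theorem mul_apply_le (hP : IsPrevision P) {u g : X → ℝ≥0∞} (hu : LowerSemicontinuous u)
    (hg : LowerSemicontinuous g) {c : ℝ≥0∞} (hle : ∀ x, c * u x ≤ g x) : c * P u ≤ P g := by
  -- Homogeneity only covers finite scalars, so `c = ∞` is reached as a limit.
  refine ENNReal.mul_le_of_forall_lt fun a hac b hb => ?_
  lift a to ℝ≥0 using hac.ne_top
  have lsc_smul : LowerSemicontinuous fun x => (a : ℝ≥0∞) * u x :=
    (ENNReal.continuous_const_mul ENNReal.coe_ne_top).comp_lowerSemicontinuous hu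
      fun _ _ h => mul_le_mul_right h _
  calc (a : ℝ≥0∞) * b ≤ a * P u := mul_le_mul_right hb.le _
    _ = P fun x => a * u x := (hP.2.2 a u hu).symm
    _ ≤ P g := hP.1 lsc_smul hg fun x => (mul_le_mul_left hac.le _).trans (hle x)

theorem const_mul (hF : IsPrevision F) (c : ℝ≥0∞) : IsPrevision fun g => c * F g := by
  refine ⟨fun g g' hg hg' hle => mul_le_mul_right (hF.1 hg hg' hle) c, ?_, ?_⟩
  · intro D hne hlsc hdir
    simp only [hF.2.1 D hne hlsc hdir, ENNReal.mul_iSup]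
  · intro a g hg
    simp only [hF.2.2 a g hg, mul_left_comm]

theorem inf (hF : IsPrevision F) (hG : IsPrevision G) : IsPrevision (F ⊓ G) := by
  refine ⟨fun g g' hg hg' hle => inf_le_inf (hF.1 hg hg' hle) (hG.1 hg hg' hle), ?_, ?_⟩
  · intro D hne hlsc hdir
    have : IsDirectedOrder D := ⟨directedOn_iff_directed.1 hdir⟩
    have hmono {H : (X → ℝ≥0∞) → ℝ≥0∞} (hH : IsPrevision H) : Monotone fun d : D => H d :=
      fun d e hle => hH.1 (hlsc d d.2) (hlsc e e.2) hle
    rw [Pi.inf_apply, hF.2.1 D hne hlsc hdir, hG.2.1 D hne hlsc hdir]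
    simp only [iSup_subtype', Pi.inf_apply]
    exact (iSup_inf_of_monotone (hmono hF) (hmono hG)).symm
  · intro a g hg
    simp only [Pi.inf_apply, hF.2.2 a g hg, hG.2.2 a g hg]
    exact (mul_min _ _ _).symm

end IsPrevision

theorem iInf_compact_iSup_of_directedOn {γ : Type*} [CompleteLinearOrder γ] [DenselyOrdered γ]
    {K : Set X} (hK : IsCompact K) {D : Set (X → γ)} (hne : D.Nonempty)
    (hlsc : ∀ d ∈ D, LowerSemicontinuous d) (hdir : DirectedOn (· ≤ ·) D) :
    ⨅ x : K, ⨆ d ∈ D, d x = ⨆ d ∈ D, ⨅ x : K, d x := by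
  refine le_antisymm (le_of_forall_lt_imp_le_of_dense fun t ht => ?_)
    (iSup₂_le fun d hd => iInf_mono fun x => le_iSup₂ (f := fun d (_ : d ∈ D) => d x) d hd)
  have : Nonempty D := hne.to_subtype
  have hcover : K ⊆ ⋃ d : D, {x | t < d.1 x} := fun x hx => by
    have hlt : t < ⨆ d ∈ D, d x := ht.trans_le (iInf_le _ (⟨x, hx⟩ : K))
    simpa only [lt_iSup_iff, mem_iUnion, Subtype.exists] using! hlt
  have hdirected : Directed (· ⊆ ·) fun d : D => {x | t < d.1 x} :=
    (directedOn_iff_directed.1 hdir).mono_comp (g := fun u : X → γ => {x | t < u x}) _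
      fun _ _ hle x hx => lt_of_lt_of_le hx (hle x)
  obtain ⟨d, hKd⟩ := hK.elim_directed_cover _ (fun d : D => (hlsc d d.2).isOpen_preimage t)
    hcover hdirected
  exact le_iSup₂_of_le d.1 d.2 (le_iInf fun x => (hKd x.2).le)

theorem isPrevision_iInf_compact (K : NonemptyCompacts X) :
    IsPrevision fun g : X → ℝ≥0∞ => ⨅ x : K, g x := by
  refine ⟨fun g g' _ _ hle => iInf_mono fun x => hle x, ?_, ?_⟩
  · exact fun D => iInf_compact_iSup_of_directedOn K.isCompact
  · intro a g _
    have : Nonempty K := K.nonempty.to_subtype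
    exact (ENNReal.mul_iInf fun h => absurd h ENNReal.coe_ne_top).symm

theorem pSuperlinear_iInf_compact (K : NonemptyCompacts X) :
    PSuperlinear fun g : X → ℝ≥0∞ => ⨅ x : K, g x :=
  fun _ _ _ _ => le_iInf fun x => add_le_add (iInf_le _ x) (iInf_le _ x)

namespace PSuperlinear

variable {F G : (X → ℝ≥0∞) → ℝ≥0∞}

theorem const_mul (hF : PSuperlinear F) (c : ℝ≥0∞) : PSuperlinear fun g => c * F g := by
  intro g g' hg hg'
  simp only [← mul_add]
  exact mul_le_mul_right (hF g g' hg hg') c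

theorem inf (hF : PSuperlinear F) (hG : PSuperlinear G) : PSuperlinear (F ⊓ G) :=
  fun g g' hg hg' => le_inf
    ((add_le_add inf_le_left inf_le_left).trans (hF g g' hg hg'))
    ((add_le_add inf_le_right inf_le_right).trans (hG g g' hg hg'))

end PSuperlinear

/-- A nonempty compact set together with a positive constant that bounds `h` from below on it.
These are the pieces from which `h` is approximated from below. -/
structure CompactStep (h : X → ℝ≥0∞) where
  support : NonemptyCompacts X
  height : ℝ≥0
  height_pos : 0 < height
  height_le : ∀ x ∈ support, (height : ℝ≥0∞) ≤ h x

namespace CompactStep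

variable {h g : X → ℝ≥0∞}

/-- The lower semicontinuous step function of a compact step. It is supported on the interior, as
the indicator function of a compact set is not lower semicontinuous in general. -/
noncomputable def openStep (q : CompactStep h) : X → ℝ≥0∞ :=
  (interior (q.support : Set X)).indicator fun _ => q.height

/-- The largest constant `t` such that `t * q.height ≤ g` on the support of `q`. -/
noncomputable def minRatio (q : CompactStep h) (g : X → ℝ≥0∞) : ℝ≥0∞ :=
  (q.height : ℝ≥0∞)⁻¹ * ⨅ x : q.support, g x

theorem lowerSemicontinuous_openStep (q : CompactStep h) : LowerSemicontinuous q.openStep :=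
  isOpen_interior.lowerSemicontinuous_indicator bot_le

theorem openStep_le (q : CompactStep h) : q.openStep ≤ h :=
  indicator_le fun x hx => q.height_le x (interior_subset hx)

theorem iSup_openStep [LocallyCompactSpace X] (hh : LowerSemicontinuous h) :
    ⨆ q : CompactStep h, q.openStep = h := by
  refine le_antisymm (iSup_le openStep_le) fun x => le_of_forall_lt fun t ht => ?_
  obtain ⟨c, htc, hch⟩ := ENNReal.lt_iff_exists_nnreal_btwn.1 ht
  obtain ⟨K, hKx, hKh, hK⟩ := LocallyCompactSpace.local_compact_nhds x _ (hh x c hch)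
  let q : CompactStep h :=
    { support := ⟨⟨K, hK⟩, x, mem_of_mem_nhds hKx⟩
      height := c
      height_pos := ENNReal.coe_pos.1 (bot_le.trans_lt htc)
      height_le := fun y hy => (hKh hy).le }
  have openStep_eq : q.openStep x = c := indicator_of_mem (mem_interior_iff_mem_nhds.2 hKx) _
  calc t < q.openStep x := openStep_eq ▸ htc
    _ ≤ (⨆ q : CompactStep h, q.openStep) x := le_iSup openStep q x

theorem isPrevision_minRatio (q : CompactStep h) : IsPrevision q.minRatio :=
  (isPrevision_iInf_compact q.support).const_mul _

theorem pSuperlinear_minRatio (q : CompactStep h) : PSuperlinear q.minRatio :=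
  (pSuperlinear_iInf_compact q.support).const_mul _

theorem one_le_minRatio_self (q : CompactStep h) : 1 ≤ q.minRatio h := by
  have height_ne_zero : (q.height : ℝ≥0∞) ≠ 0 := ENNReal.coe_ne_zero.2 q.height_pos.ne'
  calc (1 : ℝ≥0∞) = (q.height : ℝ≥0∞)⁻¹ * q.height :=
        (ENNReal.inv_mul_cancel height_ne_zero ENNReal.coe_ne_top).symm
    _ ≤ q.minRatio h := by
        rw [minRatio]
        gcongr
        exact le_iInf fun x => q.height_le x x.2

theorem minRatio_mul_openStep_le (q : CompactStep h) (g : X → ℝ≥0∞) (x : X) :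
    q.minRatio g * q.openStep x ≤ g x := by
  by_cases hx : x ∈ interior (q.support : Set X)
  · have minRatio_le : q.minRatio g ≤ g x / q.height := by
      rw [minRatio, mul_comm, ← div_eq_mul_inv]
      exact ENNReal.div_le_div_right (iInf_le _ (⟨x, interior_subset hx⟩ : q.support)) _
    rw [openStep, indicator_of_mem hx]
    exact ENNReal.mul_le_of_le_div minRatio_le
  · simp only [openStep, indicator_of_notMem hx, mul_zero, zero_le]

variable {s : Finset (CompactStep h)}

theorem inf'_minRatio_mul_sup_openStep_le (hs : s.Nonempty) (g : X → ℝ≥0∞) (x : X) :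
    s.inf' hs minRatio g * s.sup openStep x ≤ g x := by
  simp only [Finset.sup_apply, Finset.sup_eq_iSup, ENNReal.mul_iSup, iSup_le_iff]
  intro q hq
  exact (mul_le_mul_left (Finset.inf'_le minRatio hq g) _).trans (q.minRatio_mul_openStep_le g x)

theorem one_le_inf'_minRatio_self (hs : s.Nonempty) : 1 ≤ s.inf' hs minRatio h := by
  rw [Finset.inf'_apply]
  exact Finset.le_inf' _ _ fun q _ => q.one_le_minRatio_self

theorem isPrevision_inf'_minRatio (hs : s.Nonempty) : IsPrevision (s.inf' hs minRatio) :=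
  Finset.inf'_induction hs _ (fun _ hF _ hG => hF.inf hG) fun q _ => q.isPrevision_minRatio

theorem pSuperlinear_inf'_minRatio (hs : s.Nonempty) : PSuperlinear (s.inf' hs minRatio) :=
  Finset.inf'_induction hs _ (fun _ hF _ hG => hF.inf hG) fun q _ => q.pSuperlinear_minRatio

theorem mul_inf'_minRatio_le {P : (X → ℝ≥0∞) → ℝ≥0∞} (hP : IsPrevision P) (hs : s.Nonempty)
    (hg : LowerSemicontinuous g) :
    P (s.sup openStep) * s.inf' hs minRatio g ≤ P g := by
  rw [mul_comm]
  exact hP.mul_apply_le (lowerSemicontinuous_finset_sup lowerSemicontinuous_openStep s) hg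
    (inf'_minRatio_mul_sup_openStep_le hs g)

end CompactStep

end

/-- on a locally compact space, every prevision is the pointwise supremum
of the superlinear previsions below it. -/
theorem statement18 {X : Type*} [TopologicalSpace X] [LocallyCompactSpace X]
    (P : (X → ℝ≥0∞) → ℝ≥0∞) (hP : IsPrevision P) :
    ∀ h : X → ℝ≥0∞, LowerSemicontinuous h →
      P h = ⨆ F : {F : (X → ℝ≥0∞) → ℝ≥0∞ //
          IsPrevision F ∧ PSuperlinear F ∧
            ∀ g : X → ℝ≥0∞, LowerSemicontinuous g → F g ≤ P g}, F.1 h := by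
  intro h hh
  refine le_antisymm ?_ (iSup_le fun F => F.2.2.2 h hh)
  calc P h = P (⨆ q : CompactStep h, q.openStep) := by rw [CompactStep.iSup_openStep hh]
    _ = ⨆ s : Finset (CompactStep h), P (s.sup CompactStep.openStep) :=
        hP.map_iSup_eq_iSup_finset_sup CompactStep.lowerSemicontinuous_openStep
    _ ≤ _ := iSup_le fun s => ?_
  obtain rfl | hs := s.eq_empty_or_nonempty
  · rw [Finset.sup_empty, hP.map_bot]
    exact zero_le
  · refine le_iSup_of_le
      ⟨fun g => P (s.sup CompactStep.openStep) * s.inf' hs CompactStep.minRatio g,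
        (CompactStep.isPrevision_inf'_minRatio hs).const_mul _,
        (CompactStep.pSuperlinear_inf'_minRatio hs).const_mul _,
        fun g hg => CompactStep.mul_inf'_minRatio_le hP hs hg⟩ ?_
    exact le_mul_of_one_le_right' (CompactStep.one_le_inf'_minRatio_self hs)
end
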